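/- For every odd n = 2k−1, every integer p ≥ 2, and every choice of parameters ℓ₁,…,ℓ_k each coprime to p, the lens space satisfies cat(L^n_p(ℓ₁,…,ℓ_k)) = n. -/

import Mathlib

open scoped Topology

/-- The Lusternik–Schnirelmann category of a space (normalized so that contractible spaces
have category 0): the least `k` such that `X` admits an open cover by `k+1` sets, each of
which has nullhomotopic inclusion into `X` (i.e. is contractible in `X`). -/
noncomputable def lsCat (X : Type*) [TopologicalSpace X] : ℕ :=
  sInf {k : ℕ | ∃ U : Fin (k + 1) → Set X,
    (∀ i, IsOpen (U i)) ∧ (⋃ i, U i) = Set.univ ∧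
    ∀ i, ContinuousMap.Nullhomotopic
      (⟨Subtype.val, continuous_subtype_val⟩ : C(U i, X))}

/-- The orbit relation on the unit sphere of `ℂ^k` defining the lens space
`L^{2k-1}_p(ℓ₁,…,ℓ_k)`: a fixed generator of `ℤ/p` acts coordinatewise by
`z_j ↦ exp(2πiℓ_j/p) z_j`, and `m` ranges over the powers of this generator. -/
def lensRel (p k : ℕ) (ℓ : Fin k → ℤ) :
    Metric.sphere (0 : EuclideanSpace ℂ (Fin k)) 1 →
      Metric.sphere (0 : EuclideanSpace ℂ (Fin k)) 1 → Prop :=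
  fun x y => ∃ m : ℤ, ∀ j : Fin k,
    (y.1 j) = Complex.exp (2 * Real.pi * Complex.I * m * ℓ j / p) * (x.1 j)

/-- The lens space `L^{2k-1}_p(ℓ₁,…,ℓ_k)`: the orbit space of the free linear action of `ℤ/p`
on the unit sphere `S^{2k-1} ⊆ ℂ^k` determined by the parameters `ℓ`, with the quotient
topology. -/
noncomputable def LensSpace (p k : ℕ) (ℓ : Fin k → ℤ) : Type :=
  Quot (lensRel p k ℓ)

noncomputable instance (p k : ℕ) (ℓ : Fin k → ℤ) : TopologicalSpace (LensSpace p k ℓ) :=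
  inferInstanceAs (TopologicalSpace (Quot (lensRel p k ℓ)))

namespace LensCat

open FreeAbelianGroup

/-- Ordered (augmented) chains on a set of vertices: formal sums of lists. -/
abbrev LCh (X : Type*) := FreeAbelianGroup (List X)

section Chains

variable {X : Type*}

/-- Cone operator. -/
noncomputable def lcons (x : X) : LCh X →+ LCh X := FreeAbelianGroup.map (List.cons x)

@[simp] lemma lcons_of (x : X) (l : List X) : lcons x (of l) = of (x :: l) := by
  simp [lcons]

/-- Boundary of a list. -/
noncomputable def lbdA : List X → LCh X
  | [] => 0
  | x :: l => of l - lcons x (lbdA l)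

/-- Boundary operator. -/
noncomputable def lbd : LCh X →+ LCh X := FreeAbelianGroup.lift lbdA

@[simp] lemma lbd_nil : lbd (of ([] : List X)) = 0 := by simp [lbd, lbdA]

lemma lbd_of_cons (x : X) (l : List X) :
    lbd (of (x :: l)) = of l - lcons x (lbd (of l)) := by simp [lbd, lbdA]

lemma lbd_cons (x : X) (c : LCh X) : lbd (lcons x c) = c - lcons x (lbd c) := by
  have : (lbd.comp (lcons x)) = AddMonoidHom.id _ - (lcons x).comp lbd := by
    ext l
    simp [lbd_of_cons]
  exact DFunLike.congr_fun this c

/-- Induced map. -/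
noncomputable def lmap {Y : Type*} (f : X → Y) : LCh X →+ LCh Y :=
  FreeAbelianGroup.map (List.map f)

@[simp] lemma lmap_of {Y : Type*} (f : X → Y) (l : List X) :
    lmap f (of l) = of (l.map f) := by simp [lmap]

lemma lmap_cons {Y : Type*} (f : X → Y) (x : X) (c : LCh X) :
    lmap f (lcons x c) = lcons (f x) (lmap f c) := by
  have : (lmap f).comp (lcons x) = (lcons (f x)).comp (lmap f) := by
    ext l
    simp
  exact DFunLike.congr_fun this c

lemma lmap_lmap {Y Z : Type*} (f : X → Y) (g : Y → Z) (c : LCh X) :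
    lmap g (lmap f c) = lmap (g ∘ f) c := by
  have : (lmap g).comp (lmap f) = lmap (g ∘ f) := by
    ext l
    simp
  exact DFunLike.congr_fun this c

lemma lbd_lmap {Y : Type*} (f : X → Y) (c : LCh X) : lbd (lmap f c) = lmap f (lbd c) := by
  have : lbd.comp (lmap f) = (lmap f).comp lbd := by
    ext l
    induction l with
    | nil => simp
    | cons x l ih =>
      simp only [AddMonoidHom.comp_apply, lmap_of] at ih ⊢
      simp only [List.map_cons, lbd_of_cons, ih, map_sub, lmap_of, lmap_cons]
  exact DFunLike.congr_fun this c

/-- Prism of a list. -/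
noncomputable def prismA {Y : Type*} (f g : X → Y) : List X → LCh Y
  | [] => 0
  | x :: l => of (f x :: g x :: l.map g) - lcons (f x) (prismA f g l)

/-- Prism operator. -/
noncomputable def prism {Y : Type*} (f g : X → Y) : LCh X →+ LCh Y :=
  FreeAbelianGroup.lift (prismA f g)

@[simp] lemma prism_nil {Y : Type*} (f g : X → Y) : prism f g (of []) = 0 := by
  simp [prism, prismA]

lemma prism_of_cons {Y : Type*} (f g : X → Y) (x : X) (l : List X) :
    prism f g (of (x :: l)) = lcons (f x) (lcons (g x) (lmap g (of l)))
      - lcons (f x) (prism f g (of l)) := by simp [prism, prismA]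

lemma prism_cons {Y : Type*} (f g : X → Y) (x : X) (c : LCh X) :
    prism f g (lcons x c) = lcons (f x) (lcons (g x) (lmap g c))
      - lcons (f x) (prism f g c) := by
  have : (prism f g).comp (lcons x) = (lcons (f x)).comp ((lcons (g x)).comp (lmap g))
      - (lcons (f x)).comp (prism f g) := by
    ext l
    simp [prism_of_cons]
  exact DFunLike.congr_fun this c

lemma prism_homotopy {Y : Type*} (f g : X → Y) (c : LCh X) :
    lbd (prism f g c) + prism f g (lbd c) = lmap g c - lmap f c := by
  have : lbd.comp (prism f g) + (prism f g).comp lbd = lmap g - lmap f := by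
    ext l
    induction l with
    | nil => simp
    | cons x l ih =>
      simp only [AddMonoidHom.add_apply, AddMonoidHom.comp_apply, AddMonoidHom.sub_apply] at ih ⊢
      have ih' : lbd (prism f g (of l)) = lmap g (of l) - lmap f (of l)
          - prism f g (lbd (of l)) := by rw [← ih]; abel
      rw [← lcons_of]
      simp only [lbd_cons, prism_cons, lmap_cons, map_sub, ih', lbd_lmap]
      abel
  exact DFunLike.congr_fun this c

/-- Chains all of whose lists belong to `T`. -/
def Sup (T : Set (List X)) : AddSubgroup (LCh X) := AddSubgroup.closure (of '' T)

lemma of_mem_Sup {T : Set (List X)} {l : List X} (h : l ∈ T) : of l ∈ Sup T :=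
  AddSubgroup.subset_closure ⟨l, h, rfl⟩

lemma Sup_map {Y : Type*} {T : Set (List X)} {A : AddSubgroup (LCh Y)}
    (φ : LCh X →+ LCh Y) (h : ∀ l ∈ T, φ (of l) ∈ A) {z : LCh X} (hz : z ∈ Sup T) : φ z ∈ A := by
  have : Sup T ≤ A.comap φ := by
    rw [Sup, AddSubgroup.closure_le]
    rintro _ ⟨l, hl, rfl⟩
    exact h l hl
  exact this hz

lemma Sup_mono {T T' : Set (List X)} (h : T ⊆ T') : Sup T ≤ Sup T' :=
  AddSubgroup.closure_mono (Set.image_mono h)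

lemma Sup_eq {A : Type*} [AddCommGroup A] {T : Set (List X)}
    (φ ψ : LCh X →+ A) (h : ∀ l ∈ T, φ (of l) = ψ (of l)) {z : LCh X} (hz : z ∈ Sup T) :
    φ z = ψ z := by
  have : Sup T ≤ φ.eqLocus ψ := by
    rw [Sup, AddSubgroup.closure_le]
    rintro _ ⟨l, hl, rfl⟩
    exact h l hl
  exact this hz

lemma prism_mem {Y : Type*} (f g : X → Y) (l : List X) :
    prism f g (of l) ∈ Sup {m : List Y | m.length = l.length + 1 ∧
      ∀ a ∈ m, ∃ v ∈ l, a = f v ∨ a = g v} := by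
  induction l with
  | nil => simp
  | cons x l ih =>
    rw [prism_of_cons]
    apply AddSubgroup.sub_mem
    · simp only [lmap_of, lcons_of]
      apply of_mem_Sup
      refine ⟨by simp, ?_⟩
      intro a ha
      simp only [List.mem_cons, List.mem_map] at ha
      rcases ha with rfl | rfl | ⟨v, hv, rfl⟩
      · exact ⟨x, by simp, Or.inl rfl⟩
      · exact ⟨x, by simp, Or.inr rfl⟩
      · exact ⟨v, by simp [hv], Or.inr rfl⟩
    · refine Sup_map (lcons (f x)) ?_ ih
      rintro m ⟨h1, h2⟩
      rw [lcons_of]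
      apply of_mem_Sup
      refine ⟨by simp [h1], ?_⟩
      intro a ha
      rcases List.mem_cons.1 ha with rfl | ha
      · exact ⟨x, by simp, Or.inl rfl⟩
      · obtain ⟨v, hv, h⟩ := h2 a ha
        exact ⟨v, by simp [hv], h⟩

end Chains

section Small

variable {X : Type*} [MetricSpace X]

/-- Small ordered simplices (lists of given length) in a subset. -/
def Sm (δ : ℝ) (K : Set X) (d : ℕ) : Set (List X) :=
  {l | l.length = d ∧ (∀ a ∈ l, a ∈ K) ∧ ∀ a ∈ l, ∀ b ∈ l, dist a b < δ}

lemma Sm_mono {δ δ' : ℝ} {K K' : Set X} (h : δ ≤ δ') (hK : K ⊆ K') (d : ℕ) :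
    Sm δ K d ⊆ Sm δ' K' d := fun _ hl =>
  ⟨hl.1, fun a ha => hK (hl.2.1 a ha), fun a ha b hb => (hl.2.2 a ha b hb).trans_le h⟩

theorem fill (K Q : Set X) (hK : IsCompact K) (u : X) (hu : u ∈ Q) (H : X × ℝ → X)
    (hH : ContinuousOn H (K ×ˢ Set.Icc 0 1)) (h0 : ∀ v ∈ K, H (v, 0) = v)
    (h1 : ∀ v ∈ K, H (v, 1) = u) (hQ : ∀ v ∈ K, ∀ t ∈ Set.Icc (0 : ℝ) 1, H (v, t) ∈ Q)
    (δ : ℝ) (hδ : 0 < δ) :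
    ∃ δ' > 0, ∀ d, ∀ z ∈ Sup (Sm δ' K d), lbd z = 0 →
      ∃ w ∈ Sup (Sm δ Q (d + 1)), lbd w = z := by
  have huc := (hK.prod isCompact_Icc).uniformContinuousOn_of_continuous hH
  rw [Metric.uniformContinuousOn_iff] at huc
  obtain ⟨η, hη, hηH⟩ := huc δ hδ
  obtain ⟨M, hM⟩ := exists_nat_one_div_lt hη
  have hM0 : (0 : ℝ) < (M : ℝ) + 1 := by positivity
  refine ⟨η, hη, fun d z hz hz0 => ?_⟩
  let F : ℕ → X → X := fun s v => H (v, (s : ℝ) / ((M : ℝ) + 1))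
  have hF0 : lmap (F 0) z = z := by
    refine Sup_eq (lmap (F 0)) (AddMonoidHom.id _) ?_ hz
    intro l hl
    simp only [lmap_of, AddMonoidHom.id_apply]
    congr 1
    conv_rhs => rw [← List.map_id l]
    apply List.map_congr_left
    intro a ha
    simp [F, h0 a (hl.2.1 a ha)]
  have hF1 : ∀ v ∈ K, F (M + 1) v = u := by
    intro v hv
    simp only [F]
    push_cast
    rw [div_self hM0.ne', h1 v hv]
  have hpr : ∀ s, lbd (prism (F s) (F (s + 1)) z) = lmap (F (s + 1)) z - lmap (F s) z := by
    intro s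
    have := prism_homotopy (F s) (F (s + 1)) z
    rwa [hz0, map_zero, add_zero] at this
  have hIcc : ∀ s : ℕ, s ≤ M + 1 → (s : ℝ) / ((M : ℝ) + 1) ∈ Set.Icc (0 : ℝ) 1 := by
    intro s hs
    refine ⟨by positivity, ?_⟩
    rw [div_le_one hM0]
    exact_mod_cast hs
  refine ⟨lcons u (lmap (F (M + 1)) z) -
    ∑ s ∈ Finset.range (M + 1), prism (F s) (F (s + 1)) z, ?_, ?_⟩
  · apply AddSubgroup.sub_mem
    · refine Sup_map ((lcons u).comp (lmap (F (M + 1)))) ?_ hz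
      intro l hl
      simp only [AddMonoidHom.comp_apply, lmap_of, lcons_of]
      apply of_mem_Sup
      have hall : ∀ a ∈ u :: l.map (F (M + 1)), a = u := by
        intro a ha
        simp only [List.mem_cons, List.mem_map] at ha
        rcases ha with rfl | ⟨v, hv, rfl⟩
        · rfl
        · exact hF1 v (hl.2.1 v hv)
      refine ⟨by simp [hl.1], fun a ha => ?_, fun a ha b hb => ?_⟩
      · rw [hall a ha]; exact hu
      · rw [hall a ha, hall b hb, dist_self]; exact hδ
    · apply AddSubgroup.sum_mem
      intro s hs
      have hs' : s + 1 ≤ M + 1 := by simpa using hs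
      refine Sup_map _ ?_ hz
      intro l hl
      refine Sup_mono ?_ (prism_mem _ _ l)
      rintro m ⟨hm1, hm2⟩
      have key : ∀ a ∈ m, ∃ v ∈ l, ∃ r : ℕ, (r = s ∨ r = s + 1) ∧ a = F r v := by
        intro a ha
        obtain ⟨v, hv, h | h⟩ := hm2 a ha
        · exact ⟨v, hv, s, Or.inl rfl, h⟩
        · exact ⟨v, hv, s + 1, Or.inr rfl, h⟩
      refine ⟨by rw [hm1, hl.1], fun a ha => ?_, fun a ha b hb => ?_⟩
      · obtain ⟨v, hv, r, hr, rfl⟩ := key a ha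
        exact hQ v (hl.2.1 v hv) _ (hIcc r (by omega))
      · obtain ⟨v, hv, r, hr, rfl⟩ := key a ha
        obtain ⟨w, hw, q, hq, rfl⟩ := key b hb
        apply hηH
        · exact ⟨hl.2.1 v hv, hIcc r (by omega)⟩
        · exact ⟨hl.2.1 w hw, hIcc q (by omega)⟩
        · rw [Prod.dist_eq, max_lt_iff]
          refine ⟨hl.2.2 v hv w hw, ?_⟩
          simp only [Real.dist_eq]
          refine lt_of_le_of_lt ?_ hM
          rw [← sub_div, abs_div, abs_of_pos hM0]
          apply div_le_div_of_nonneg_right _ hM0.le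
          rcases hr with rfl | rfl <;> rcases hq with rfl | rfl <;> simp
  · have hc : lbd (lmap (F (M + 1)) z) = 0 := by rw [lbd_lmap, hz0, map_zero]
    rw [map_sub, map_sum, lbd_cons, hc, map_zero, sub_zero, Finset.sum_congr rfl fun s _ => hpr s,
      Finset.sum_range_sub (fun s => lmap (F s) z), hF0]
    abel

end Small

section Cochains

variable {X : Type*} {p : ℕ}

/-- Evaluation of a cochain. -/
noncomputable def ev (f : List X → ZMod p) : LCh X →+ ZMod p := FreeAbelianGroup.lift f

@[simp] lemma ev_of (f : List X → ZMod p) (l : List X) : ev f (of l) = f l := by simp [ev]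

lemma ev_lcons (f h : List X → ZMod p) (a : ZMod p) (x : X) (hf : ∀ l, f (x :: l) = a * h l)
    (c : LCh X) : ev f (lcons x c) = a * ev h c := by
  have : (ev f).comp (lcons x) = (AddMonoidHom.mulLeft a).comp (ev h) := by
    ext l
    simp [hf]
  exact DFunLike.congr_fun this c

/-- Coboundary of a 1-cochain. -/
def dB (B : X → X → ZMod p) (u v w : X) : ZMod p := B u v + B v w - B u w

/-- The iterated product of 2-cochains. -/
def cc (B : ℕ → X → X → ZMod p) : ℕ → List X → ZMod p
  | 0, _ => 1
  | i + 1, u :: v :: w :: l => dB (B i) u v w * cc B i (w :: l)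
  | _ + 1, _ => 0

/-- Product of a 1-cochain with a cochain. -/
def D1 (b : X → X → ZMod p) (h : List X → ZMod p) : List X → ZMod p
  | u :: v :: l => b u v * h (v :: l)
  | _ => 0

/-- Product of a 0-cochain with a cochain. -/
def D0 (g : X → ZMod p) (h : List X → ZMod p) : List X → ZMod p
  | u :: l => g u * h (u :: l)
  | _ => 0

lemma ev_cc_succ (B : ℕ → X → X → ZMod p) (i : ℕ) (u v w : X) (c : LCh X) :
    ev (cc B (i + 1)) (lcons u (lcons v (lcons w c))) =
      dB (B i) u v w * ev (cc B i) (lcons w c) := by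
  rw [ev_lcons _ (fun l => cc B (i + 1) (u :: l)) 1 u (by simp), one_mul,
    ev_lcons _ (fun l => cc B (i + 1) (u :: v :: l)) 1 v (by simp), one_mul,
    ev_lcons _ (fun l => cc B i (w :: l)) (dB (B i) u v w) w (by simp [cc]),
    ev_lcons (cc B i) (fun l => cc B i (w :: l)) 1 w (by simp), one_mul]

lemma ev_D1 (b : X → X → ZMod p) (h : List X → ZMod p) (u v : X) (c : LCh X) :
    ev (D1 b h) (lcons u (lcons v c)) = b u v * ev h (lcons v c) := by
  rw [ev_lcons _ (fun l => D1 b h (u :: l)) 1 u (by simp), one_mul,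
    ev_lcons _ (fun l => h (v :: l)) (b u v) v (by simp [D1]),
    ev_lcons h (fun l => h (v :: l)) 1 v (by simp), one_mul]

lemma ev_D0 (g : X → ZMod p) (h : List X → ZMod p) (u : X) (c : LCh X) :
    ev (D0 g h) (lcons u c) = g u * ev h (lcons u c) := by
  rw [ev_lcons _ (fun l => h (u :: l)) (g u) u (by simp [D0]),
    ev_lcons h (fun l => h (u :: l)) 1 u (by simp), one_mul]

lemma cc_cocycle (B : ℕ → X → X → ZMod p) (i : ℕ) (l : List X) (hl : l.length = 2 * i + 2) :
    ev (cc B i) (lbd (of l)) = 0 := by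
  induction i generalizing l with
  | zero =>
    match l, hl with
    | [u, v], _ =>
      simp [lbd_of_cons, cc]
  | succ i ih =>
    match l, hl with
    | u :: v :: w :: x :: l, hl =>
      have h1 := ih (w :: x :: l) (by simp at hl ⊢; omega)
      have h2 : ev (cc B i) (lcons w (lbd (lcons x (of l)))) = cc B i (x :: l) := by
        rw [← lcons_of, lbd_cons, map_sub] at h1
        rw [lcons_of, ← sub_eq_zero.1 h1]
        simp
      have h3 : lbd (of (u :: v :: w :: x :: l)) = of (v :: w :: x :: l) - of (u :: w :: x :: l)
          + of (u :: v :: x :: l) - lcons u (lcons v (lcons w (lbd (lcons x (of l))))) := by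
        rw [lbd_of_cons, lbd_of_cons, lbd_of_cons, ← lcons_of]
        simp only [map_sub, lcons_of]
        abel
      rw [h3, map_sub, map_add, map_sub, ev_cc_succ, h2]
      simp only [ev_of, cc, dB]
      ring

lemma ev_D1_lbd (B : ℕ → X → X → ZMod p) (b : X → X → ZMod p) (i : ℕ) (u v w : X) (l : List X)
    (hl : l.length = 2 * i) :
    ev (D1 b (cc B i)) (lbd (of (u :: v :: w :: l))) = dB b u v w * cc B i (w :: l) := by
  have h1 := cc_cocycle B i (v :: w :: l) (by simp [hl])
  have h2 : ev (cc B i) (lcons v (lbd (lcons w (of l)))) = cc B i (w :: l) := by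
    rw [← lcons_of, lbd_cons, map_sub] at h1
    rw [lcons_of, ← sub_eq_zero.1 h1]
    simp
  have h3 : lbd (of (u :: v :: w :: l)) = of (v :: w :: l) - of (u :: w :: l)
      + lcons u (lcons v (lbd (lcons w (of l)))) := by
    rw [lbd_of_cons, lbd_of_cons, ← lcons_of]
    simp only [map_sub, lcons_of]
    abel
  rw [h3, map_add, map_sub, ev_D1, h2]
  simp only [ev_of, D1, dB]
  ring

lemma ev_D0_lbd (B : ℕ → X → X → ZMod p) (g : X → ZMod p) (i : ℕ) (v w : X) (l : List X)
    (hl : l.length = 2 * i) :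
    ev (D0 g (cc B i)) (lbd (of (v :: w :: l))) = (g w - g v) * cc B i (w :: l) := by
  have h1 := cc_cocycle B i (v :: w :: l) (by simp [hl])
  have h2 : ev (cc B i) (lcons v (lbd (lcons w (of l)))) = cc B i (w :: l) := by
    rw [← lcons_of, lbd_cons, map_sub] at h1
    rw [lcons_of, ← sub_eq_zero.1 h1]
    simp
  have h3 : lbd (of (v :: w :: l)) = of (w :: l) - lcons v (lbd (lcons w (of l))) := by
    rw [lbd_of_cons, ← lcons_of]
  rw [h3, map_sub, ev_D0, h2]
  simp only [ev_of, D0]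
  ring

lemma cc_inv (B : ℕ → X → X → ZMod p) (τ : X → X)
    (hB : ∀ i u v w, dB (B i) (τ u) (τ v) (τ w) = dB (B i) u v w) (i : ℕ) (l : List X) :
    cc B i (l.map τ) = cc B i l := by
  induction i generalizing l with
  | zero => simp [cc]
  | succ i ih =>
    match l with
    | [] => simp [cc]
    | [_] => simp [cc]
    | [_, _] => simp [cc]
    | u :: v :: w :: l =>
      have := ih (w :: l)
      simp only [List.map_cons] at this ⊢
      simp only [cc, hB, this]

lemma cc_inv_iter (B : ℕ → X → X → ZMod p) (τ : X → X)
    (hB : ∀ i u v w, dB (B i) (τ u) (τ v) (τ w) = dB (B i) u v w) (i s : ℕ) (l : List X) :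
    cc B i (l.map τ^[s]) = cc B i l := by
  induction s generalizing l with
  | zero => simp
  | succ s ih =>
    rw [Function.iterate_succ, ← List.map_map, ih, cc_inv B τ hB]

lemma ev_lmap (f : List X → ZMod p) (t : X → X) (c : LCh X) :
    ev f (lmap t c) = ev (fun l => f (l.map t)) c := by
  have : (ev f).comp (lmap t) = ev (fun l => f (l.map t)) := by
    ext l
    simp
  exact DFunLike.congr_fun this c

/-- The norm operator. -/
noncomputable def nrm (p : ℕ) (τ : X → X) : LCh X →+ LCh X :=
  ∑ s ∈ Finset.range p, lmap (τ^[s])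

lemma nrm_apply (p : ℕ) (τ : X → X) (c : LCh X) :
    nrm p τ c = ∑ s ∈ Finset.range p, lmap (τ^[s]) c := by
  simp [nrm]

/-- lists of length `d`. -/
def Len (X : Type*) (d : ℕ) : Set (List X) := {l | l.length = d}

theorem odd_step (B : ℕ → X → X → ZMod p) (τ : X → X)
    (hB : ∀ i u v w, dB (B i) (τ u) (τ v) (τ w) = dB (B i) u v w)
    (g : X → ZMod p) (hg : ∀ v, g (τ v) = g v + 1) (i : ℕ) (x y : LCh X)
    (hx : x ∈ Sup (Len X (2 * i + 1))) (hy : y ∈ Sup (Len X (2 * i + 2)))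
    (hxy : lbd y = lmap τ x - x) :
    ev (D1 (fun v w => g w - g v) (cc B i)) y = ev (cc B i) x := by
  have h1 : ev (D1 (fun v w => g w - g v) (cc B i)) y = ev (D0 g (cc B i)) (lbd y) := by
    refine Sup_eq _ ((ev (D0 g (cc B i))).comp lbd) ?_ hy
    intro l hl
    match l, hl with
    | v :: w :: l, hl =>
      simp only [AddMonoidHom.comp_apply]
      rw [ev_D0_lbd B g i v w l (by simpa [Len] using hl)]
      simp [D1]
  rw [h1, hxy, map_sub, ev_lmap]
  have : (ev fun l => D0 g (cc B i) (l.map τ)) x - ev (D0 g (cc B i)) x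
     = ((ev fun l => D0 g (cc B i) (l.map τ)) - ev (D0 g (cc B i))) x := by simp
  rw [this]
  refine Sup_eq _ _ ?_ hx
  intro l hl
  match l, hl with
  | v :: l, hl =>
    have := cc_inv B τ hB i (v :: l)
    simp only [List.map_cons] at this
    simp only [AddMonoidHom.sub_apply, ev_of, List.map_cons, D0, this, hg]
    ring

theorem even_step [NeZero p] (B : ℕ → X → X → ZMod p) (τ : X → X)
    (hB : ∀ i u v w, dB (B i) (τ u) (τ v) (τ w) = dB (B i) u v w)
    (a : X → X → ZMod p) (i : ℕ)
    (ha : ∀ v w, ∑ s ∈ Finset.range p, B i (τ^[s] v) (τ^[s] w) = a v w) (x y : LCh X)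
    (hy : y ∈ Sup (Len X (2 * i + 3))) (hx : x ∈ Sup (Len X (2 * i + 2)))
    (hxy : lbd y = nrm p τ x) :
    ev (cc B (i + 1)) y = ev (D1 a (cc B i)) x := by
  have h1 : ev (cc B (i + 1)) y = ev (D1 (B i) (cc B i)) (lbd y) := by
    refine Sup_eq _ ((ev (D1 (B i) (cc B i))).comp lbd) ?_ hy
    intro l hl
    match l, hl with
    | u :: v :: w :: l, hl =>
      simp only [AddMonoidHom.comp_apply]
      rw [ev_D1_lbd B (B i) i u v w l (by simpa [Len] using hl)]
      simp [cc]
  rw [h1, hxy]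
  refine Sup_eq ((ev (D1 (B i) (cc B i))).comp (nrm p τ)) _ ?_ hx
  intro l hl
  match l, hl with
  | v :: w :: l, hl =>
    simp only [AddMonoidHom.comp_apply, nrm_apply, map_sum, lmap_of, ev_of, List.map_cons, D1]
    rw [← ha, Finset.sum_mul]
    refine Finset.sum_congr rfl fun s _ => ?_
    have := cc_inv_iter B τ hB i s (w :: l)
    simp only [List.map_cons] at this
    rw [this]

/-- The lifting data: correction term. -/
def BB (p : ℕ) (g : X → ZMod p) (a : X → X → ℤ) (v w : X) : ℤ :=
  (a v w - (((g w).val : ℤ) - ((g v).val : ℤ))) / p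

lemma BB_spec [NeZero p] (g : X → ZMod p) (a : X → X → ℤ)
    (ha : ∀ v w, ((a v w : ℤ) : ZMod p) = g w - g v) (v w : X) :
    (p : ℤ) * BB p g a v w = a v w - (((g w).val : ℤ) - ((g v).val : ℤ)) := by
  apply Int.mul_ediv_cancel'
  rw [← ZMod.intCast_zmod_eq_zero_iff_dvd]
  push_cast
  simp [ha]

lemma BB_inv [NeZero p] (τ : X → X) (g : X → ZMod p) (a : X → X → ℤ)
    (ha : ∀ v w, ((a v w : ℤ) : ZMod p) = g w - g v) (hat : ∀ v w, a (τ v) (τ w) = a v w)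
    (u v w : X) :
    BB p g a (τ u) (τ v) + BB p g a (τ v) (τ w) - BB p g a (τ u) (τ w) =
    BB p g a u v + BB p g a v w - BB p g a u w := by
  have hp : (p : ℤ) ≠ 0 := by exact_mod_cast NeZero.ne p
  apply mul_left_cancel₀ hp
  simp only [mul_add, mul_sub, BB_spec g a ha, hat]
  ring

lemma BB_zero [NeZero p] (g : X → ZMod p) (a : X → X → ℤ)
    (ha : ∀ v w, ((a v w : ℤ) : ZMod p) = g w - g v) (u v w : X)
    (h : a u v + a v w - a u w = 0) :
    BB p g a u v + BB p g a v w - BB p g a u w = 0 := by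
  have hp : (p : ℤ) ≠ 0 := by exact_mod_cast NeZero.ne p
  apply mul_left_cancel₀ hp
  simp only [mul_add, mul_sub, BB_spec g a ha]
  linarith

lemma sum_val_shift [NeZero p] (g c : ZMod p) :
    ∑ s ∈ Finset.range p, ((g + (s : ZMod p)).val : ℤ) =
      ∑ s ∈ Finset.range p, ((c + (s : ZMod p)).val : ℤ) := by
  have key : ∀ g : ZMod p, ∑ s ∈ Finset.range p, ((g + (s : ZMod p)).val : ℤ) =
      ∑ z : ZMod p, (z.val : ℤ) := by
    intro g
    refine Finset.sum_bij (fun s _ => g + (s : ZMod p)) (by simp) ?_ ?_ (by simp)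
    · intro s hs t ht h
      have h := add_left_cancel h
      rw [ZMod.natCast_eq_natCast_iff'] at h
      rwa [Nat.mod_eq_of_lt (by simpa using hs), Nat.mod_eq_of_lt (by simpa using ht)] at h
    · intro z _
      refine ⟨(z - g).val, by simpa using ZMod.val_lt _, by simp⟩
  rw [key, key]

lemma BB_sum [NeZero p] (τ : X → X) (g : X → ZMod p) (hg : ∀ v, g (τ v) = g v + 1)
    (a : X → X → ℤ)
    (ha : ∀ v w, ((a v w : ℤ) : ZMod p) = g w - g v) (hat : ∀ v w, a (τ v) (τ w) = a v w)
    (v w : X) : ∑ s ∈ Finset.range p, BB p g a (τ^[s] v) (τ^[s] w) = a v w := by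
  have hp : (p : ℤ) ≠ 0 := by exact_mod_cast NeZero.ne p
  apply mul_left_cancel₀ hp
  have hgs : ∀ s v, g (τ^[s] v) = g v + (s : ZMod p) := by
    intro s
    induction s with
    | zero => simp
    | succ s ih => intro v; rw [Function.iterate_succ, Function.comp_apply, ih, hg]; push_cast; ring
  have has : ∀ s v w, a (τ^[s] v) (τ^[s] w) = a v w := by
    intro s
    induction s with
    | zero => simp
    | succ s ih => intro v w; simp only [Function.iterate_succ, Function.comp_apply, ih, hat]
  rw [Finset.mul_sum]
  simp only [BB_spec g a ha, has, hgs]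
  rw [Finset.sum_sub_distrib, Finset.sum_sub_distrib, sum_val_shift (g w) (g v)]
  simp

/-- The algebraic heart of the lower bound. -/
theorem pairing [NeZero p] (τ : X → X) (g : ℕ → X → ZMod p) (hg : ∀ i v, g i (τ v) = g i v + 1)
    (a : ℕ → X → X → ℤ)
    (ha : ∀ i v w, ((a i v w : ℤ) : ZMod p) = g i w - g i v)
    (hat : ∀ i v w, a i (τ v) (τ w) = a i v w)
    (g0 : X → ZMod p) (hg0 : ∀ v, g0 (τ v) = g0 v + 1)
    (x : ℕ → LCh X) (r : ℕ)
    (hlen : ∀ j ≤ 2 * r + 1, x j ∈ Sup (Len X (j + 1)))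
    (e : X) (hx0 : x 0 = of [e])
    (hodd : ∀ i ≤ r, lbd (x (2 * i + 1)) = lmap τ (x (2 * i)) - x (2 * i))
    (heven : ∀ i < r, lbd (x (2 * i + 2)) = nrm p τ (x (2 * i + 1))) :
    ev (D1 (fun v w => g0 w - g0 v)
      (cc (fun i v w => ((BB p (g i) (a i) v w : ℤ) : ZMod p)) r)) (x (2 * r + 1)) = 1 := by
  set B : ℕ → X → X → ZMod p := fun i v w => ((BB p (g i) (a i) v w : ℤ) : ZMod p) with hBdef
  have hB : ∀ i u v w, dB (B i) (τ u) (τ v) (τ w) = dB (B i) u v w := by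
    intro i u v w
    have := congrArg (Int.cast : ℤ → ZMod p) (BB_inv τ (g i) (a i) (ha i) (hat i) u v w)
    push_cast at this
    exact this
  have main : ∀ i ≤ r, ev (cc B i) (x (2 * i)) = 1 := by
    intro i
    induction i with
    | zero => intro _; simp [hx0, cc]
    | succ i ih =>
      intro hi
      have h1 := even_step B τ hB (fun v w => g i w - g i v) i (fun v w => by
        have := congrArg (Int.cast : ℤ → ZMod p)
          (BB_sum τ (g i) (hg i) (a i) (ha i) (hat i) v w)
        push_cast at this
        rw [ha] at this
        exact this) (x (2 * i + 1)) (x (2 * i + 2)) (hlen _ (by omega)) (hlen _ (by omega))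
        (heven i (by omega))
      have h2 := odd_step B τ hB (g i) (hg i) i (x (2 * i)) (x (2 * i + 1)) (hlen _ (by omega))
        (hlen _ (by omega)) (hodd i (by omega))
      rw [show 2 * (i + 1) = 2 * i + 2 by ring, h1, h2, ih (by omega)]
  rw [odd_step B τ hB g0 hg0 r (x (2 * r)) (x (2 * r + 1)) (hlen _ (by omega))
        (hlen _ (by omega)) (hodd r le_rfl), main r le_rfl]

end Cochains

section Labels

variable {X : Type*} {p : ℕ}

lemma cc_zero (B : ℕ → X → X → ZMod p) (r q : ℕ) (hq : q < r) (l : List X)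
    (h : ∀ u ∈ l, ∀ v ∈ l, ∀ w ∈ l, dB (B q) u v w = 0) : cc B r l = 0 := by
  induction r generalizing l with
  | zero => omega
  | succ r ih =>
    match l with
    | [] => simp [cc]
    | [_] => simp [cc]
    | [_, _] => simp [cc]
    | u :: v :: w :: l =>
      simp only [cc]
      rcases Nat.lt_succ_iff_lt_or_eq.1 hq with hq' | rfl
      · rw [ih hq' (w :: l) ?_, mul_zero]
        intro a ha b hb c hc
        exact h a (List.mem_cons_of_mem _ (List.mem_cons_of_mem _ ha)) b
          (List.mem_cons_of_mem _ (List.mem_cons_of_mem _ hb)) c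
          (List.mem_cons_of_mem _ (List.mem_cons_of_mem _ hc))
      · rw [h u (by simp) v (by simp) w (by simp), zero_mul]

open Classical in
/-- A label function built from two partial label functions. -/
noncomputable def lab (R S : Set X) (γ κ σ : X → ZMod p) (v : X) : ZMod p :=
  if v ∈ R then γ v else if v ∈ S then κ v else σ v

open Classical in
/-- Rank. -/
noncomputable def rk (R S : Set X) (v : X) : ℤ := if v ∈ R then 0 else if v ∈ S then 1 else 2

open Classical in
/-- Integral lift of the difference of labels. -/
noncomputable def al (R S : Set X) (γ κ σ : X → ZMod p) (v w : X) : ℤ :=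
  if rk R S v ≤ rk R S w then ((lab R S γ κ σ w - lab R S γ κ σ v).val : ℤ)
  else -((lab R S γ κ σ v - lab R S γ κ σ w).val : ℤ)

lemma al_cast [NeZero p] (R S : Set X) (γ κ σ : X → ZMod p) (v w : X) :
    ((al R S γ κ σ v w : ℤ) : ZMod p) = lab R S γ κ σ w - lab R S γ κ σ v := by
  unfold al
  split_ifs <;> simp

lemma al_inv (R S : Set X) (γ κ σ : X → ZMod p) (τ : X → X) (hR : ∀ v, τ v ∈ R ↔ v ∈ R)
    (hS : ∀ v, τ v ∈ S ↔ v ∈ S)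
    (hl : ∀ v, lab R S γ κ σ (τ v) = lab R S γ κ σ v + 1) (v w : X) :
    al R S γ κ σ (τ v) (τ w) = al R S γ κ σ v w := by
  have h : ∀ v, rk R S (τ v) = rk R S v := by
    intro v
    by_cases h1 : v ∈ R <;> by_cases h2 : v ∈ S <;> simp [rk, hR, hS, h1, h2]
  simp only [al, hl, h, add_sub_add_right_eq_sub]

lemma lab_eqv (R S : Set X) (γ κ σ : X → ZMod p) (τ : X → X) (hR : ∀ v, τ v ∈ R ↔ v ∈ R)
    (hS : ∀ v, τ v ∈ S ↔ v ∈ S) (hγ : ∀ v ∈ R, γ (τ v) = γ v + 1)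
    (hκ : ∀ v ∈ S, κ (τ v) = κ v + 1) (hσ : ∀ v, σ (τ v) = σ v + 1) (v : X) :
    lab R S γ κ σ (τ v) = lab R S γ κ σ v + 1 := by
  by_cases h1 : v ∈ R
  · simp [lab, hR, h1, hγ v h1]
  · by_cases h2 : v ∈ S
    · simp [lab, hR, hS, h1, h2, hκ v h2]
    · simp [lab, hR, hS, h1, h2, hσ v]

lemma al_zero (R S : Set X) (γ κ σ : X → ZMod p) (l : List X)
    (hl : (∀ v ∈ l, v ∈ R) ∨ (∀ v ∈ l, v ∈ S))
    (hγ : ∀ v ∈ l, ∀ w ∈ l, v ∈ R → w ∈ R → γ v = γ w)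
    (hκ : ∀ v ∈ l, ∀ w ∈ l, v ∈ S → w ∈ S → κ v = κ w) (u v w : X)
    (hu : u ∈ l) (hv : v ∈ l) (hw : w ∈ l) :
    al R S γ κ σ u v + al R S γ κ σ v w - al R S γ κ σ u w = 0 := by
  have hRS : ∀ v ∈ l, v ∈ R ∨ v ∈ S := by
    rcases hl with h | h
    · exact fun v hv => Or.inl (h v hv)
    · exact fun v hv => Or.inr (h v hv)
  have hκ' : ∀ v ∈ l, ∀ w ∈ l, v ∉ R → w ∉ R → κ v = κ w := by
    intro v hv w hw h1 h2
    exact hκ v hv w hw ((hRS v hv).resolve_left h1) ((hRS w hw).resolve_left h2)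
  have hS : ∀ v ∈ l, v ∉ R → v ∈ S := fun v hv h => (hRS v hv).resolve_left h
  by_cases h1 : u ∈ R <;> by_cases h2 : v ∈ R <;> by_cases h3 : w ∈ R <;>
    simp only [al, rk, lab, h1, h2, h3, hS u hu, hS v hv, hS w hw, if_true, if_false,
      not_false_eq_true, le_refl, zero_le_one, show ¬ ((1 : ℤ) ≤ 0) by norm_num]
  · simp [hγ u hu v hv h1 h2, hγ v hv w hw h2 h3]
  · simp [hγ u hu v hv h1 h2]
  · simp [hγ u hu w hw h1 h3]
  · simp [hκ' v hv w hw h2 h3]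
  · simp [hγ v hv w hw h2 h3]
  · simp [hκ' u hu w hw h1 h3]
  · simp [hκ' u hu v hv h1 h2]
  · simp [hκ' u hu v hv h1 h2, hκ' v hv w hw h2 h3]

/-- Combinatorial contradiction. -/
theorem no_labels (hp : 2 ≤ p) (r : ℕ) (τ : X → X) (R : ℕ → Set X) (γ : ℕ → X → ZMod p)
    (hR : ∀ i v, τ v ∈ R i ↔ v ∈ R i) (hγ : ∀ i, ∀ v ∈ R i, γ i (τ v) = γ i v + 1)
    (T : Set (List X)) (hcov : ∀ l ∈ T, ∃ i ≤ 2 * r, ∀ v ∈ l, v ∈ R i)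
    (hcov1 : ∀ v, ∃ i, v ∈ R i)
    (hT : ∀ l ∈ T, ∀ i, ∀ v ∈ l, ∀ w ∈ l, v ∈ R i → w ∈ R i → γ i v = γ i w)
    (x : ℕ → LCh X)
    (hlen : ∀ j ≤ 2 * r + 1, x j ∈ Sup (Len X (j + 1)))
    (e : X) (hx0 : x 0 = of [e])
    (hodd : ∀ i ≤ r, lbd (x (2 * i + 1)) = lmap τ (x (2 * i)) - x (2 * i))
    (heven : ∀ i < r, lbd (x (2 * i + 2)) = nrm p τ (x (2 * i + 1)))
    (hxT : x (2 * r + 1) ∈ Sup T) : False := by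
  classical
  have : NeZero p := ⟨by omega⟩
  have : Fact (1 < p) := ⟨by omega⟩
  let σ : X → ZMod p := fun v => γ (Nat.find (hcov1 v)) v
  have hσ : ∀ v, σ (τ v) = σ v + 1 := by
    intro v
    have h : Nat.find (hcov1 (τ v)) = Nat.find (hcov1 v) := by
      apply Nat.find_congr'
      intro n
      exact hR n v
    simp only [σ, h]
    exact hγ _ v (Nat.find_spec (hcov1 v))
  let g : ℕ → X → ZMod p := fun i =>
    lab (R (2 * i + 1)) (R (2 * i + 2)) (γ (2 * i + 1)) (γ (2 * i + 2)) σ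
  let a : ℕ → X → X → ℤ := fun i =>
    al (R (2 * i + 1)) (R (2 * i + 2)) (γ (2 * i + 1)) (γ (2 * i + 2)) σ
  let g0 : X → ZMod p := lab (R 0) (R 0) (γ 0) (γ 0) σ
  have hg : ∀ i v, g i (τ v) = g i v + 1 := fun i v =>
    lab_eqv _ _ _ _ _ τ (hR _) (hR _) (hγ _) (hγ _) hσ v
  have hg0 : ∀ v, g0 (τ v) = g0 v + 1 := fun v =>
    lab_eqv _ _ _ _ _ τ (hR _) (hR _) (hγ _) (hγ _) hσ v
  have ha : ∀ i v w, ((a i v w : ℤ) : ZMod p) = g i w - g i v := fun i v w => al_cast ..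
  have hat : ∀ i v w, a i (τ v) (τ w) = a i v w := fun i v w =>
    al_inv _ _ _ _ _ τ (hR _) (hR _) (hg i) v w
  have h1 := pairing τ g hg a ha hat g0 hg0 x r hlen e hx0 hodd heven
  have h2 : ev (D1 (fun v w => g0 w - g0 v)
      (cc (fun i v w => ((BB p (g i) (a i) v w : ℤ) : ZMod p)) r)) (x (2 * r + 1)) =
      (0 : LCh X →+ ZMod p) (x (2 * r + 1)) := by
    refine Sup_eq _ _ ?_ hxT
    intro l hl
    rw [ev_of, AddMonoidHom.zero_apply]
    match l, hl with
    | [], _ => simp [D1]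
    | [_], _ => simp [D1]
    | v :: w :: l, hl =>
      simp only [D1]
      obtain ⟨i, hi, hil⟩ := hcov _ hl
      rcases Nat.eq_zero_or_pos i with rfl | hipos
      · have hv := hil v (by simp)
        have hw := hil w (by simp)
        have : g0 w = g0 v := by
          simp only [g0, lab, hv, hw, if_true]
          exact hT _ hl 0 w (by simp) v (by simp) hw hv
        rw [this, sub_self, zero_mul]
      · obtain ⟨q, hq⟩ : ∃ q, i = 2 * q + 1 ∨ i = 2 * q + 2 := ⟨(i - 1) / 2, by omega⟩
        rw [cc_zero _ r q (by omega), mul_zero]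
        intro b hb c hc d hd
        have h3 : a q b c + a q c d - a q b d = 0 := by
          refine al_zero _ _ _ _ _ (v :: w :: l) ?_ (hT _ hl _) (hT _ hl _) b c d
            (List.mem_cons_of_mem _ hb) (List.mem_cons_of_mem _ hc) (List.mem_cons_of_mem _ hd)
          rcases hq with rfl | rfl
          · exact Or.inl hil
          · exact Or.inr hil
        have := congrArg (Int.cast : ℤ → ZMod p) (BB_zero (g q) (a q) (ha q) b c d h3)
        push_cast at this
        exact this
  rw [h1] at h2
  exact one_ne_zero h2

end Labels

section MetricLabels

variable {X : Type*} [MetricSpace X] {p : ℕ}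

/-- Topological version of the contradiction. -/
theorem no_cover [CompactSpace X] (hp : 2 ≤ p) (r : ℕ) (τ : X → X) (hτ : Isometry τ)
    (hτs : Function.Surjective τ) (V : ℕ → Set X) (γ : ℕ → X → ZMod p)
    (hV : ∀ i v, τ v ∈ V i ↔ v ∈ V i)
    (hcov : ∀ v, ∃ i ≤ 2 * r, v ∈ V i)
    (hγ : ∀ i, ∀ v ∈ V i, γ i (τ v) = γ i v + 1)
    (hop : ∀ i c, IsOpen (V i ∩ γ i ⁻¹' {c}))
    (hch : ∀ δ > 0, ∃ (x : ℕ → LCh X) (e : X), x 0 = of [e] ∧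
      (∀ j ≤ 2 * r + 1, x j ∈ Sup (Sm δ Set.univ (j + 1))) ∧
      (∀ i ≤ r, lbd (x (2 * i + 1)) = lmap τ (x (2 * i)) - x (2 * i)) ∧
      (∀ i < r, lbd (x (2 * i + 2)) = nrm p τ (x (2 * i + 1)))) : False := by
  obtain ⟨δ, hδ, hleb⟩ := lebesgue_number_lemma_of_metric (s := (Set.univ : Set X)) isCompact_univ
    (c := fun ic : {i // i ≤ 2 * r} × ZMod p => V ic.1 ∩ γ ic.1 ⁻¹' {ic.2})
    (fun ic => hop _ _) (by
      intro v _
      obtain ⟨i, hi, hv⟩ := hcov v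
      exact Set.mem_iUnion.2 ⟨(⟨i, hi⟩, γ i v), hv, rfl⟩)
  let R : ℕ → Set X := fun i => {v | ∃ c, Metric.ball v (δ / 2) ⊆ V i ∩ γ i ⁻¹' {c}}
  have hRV : ∀ i, ∀ v ∈ R i, v ∈ V i := by
    rintro i v ⟨c, hc⟩
    exact (hc (Metric.mem_ball_self (by positivity))).1
  obtain ⟨x, e, hx0, hxs, hodd, heven⟩ := hch (δ / 2) (by positivity)
  refine no_labels hp r τ R γ ?_ (fun i v hv => hγ i v (hRV i v hv))
    (Sm (δ / 2) Set.univ (2 * r + 1 + 1)) ?_ ?_ ?_ x ?_ e hx0 hodd heven (hxs _ le_rfl)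
  · intro i v
    constructor
    · rintro ⟨c, hc⟩
      refine ⟨c - 1, fun w hw => ?_⟩
      have h := hc (show τ w ∈ Metric.ball (τ v) (δ / 2) by
        rw [Metric.mem_ball, hτ.dist_eq]; exact hw)
      have hw' := (hV i w).1 h.1
      refine ⟨hw', ?_⟩
      have h2 : γ i (τ w) = c := h.2
      rw [hγ i w hw'] at h2
      simp [← h2]
    · rintro ⟨c, hc⟩
      refine ⟨c + 1, fun w hw => ?_⟩
      obtain ⟨w, rfl⟩ := hτs w
      rw [Metric.mem_ball, hτ.dist_eq] at hw
      have h := hc hw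
      refine ⟨(hV i w).2 h.1, ?_⟩
      have h2 : γ i w = c := h.2
      simp [hγ i w h.1, h2]
  · intro l hl
    match l, hl with
    | v :: l, hl =>
      obtain ⟨⟨⟨i, hi⟩, c⟩, hic⟩ := hleb v (Set.mem_univ _)
      refine ⟨i, hi, fun w hw => ⟨c, fun y hy => hic ?_⟩⟩
      have := hl.2.2 w hw v (by simp)
      have h2 := dist_triangle y w v
      rw [Metric.mem_ball] at hy ⊢
      linarith
  · intro v
    obtain ⟨⟨⟨i, hi⟩, c⟩, hic⟩ := hleb v (Set.mem_univ _)
    exact ⟨i, c, (Metric.ball_subset_ball (by linarith)).trans hic⟩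
  · rintro l hl i v hv w hw ⟨c, hc⟩ -
    have h1 := (hc (Metric.mem_ball_self (by positivity))).2
    have h2 := (hc (show w ∈ _ from hl.2.2 w hw v hv)).2
    exact h1.trans h2.symm
  · intro j hj
    exact Sup_mono (fun l hl => hl.1) (hxs j hj)

end MetricLabels

section Sphere

variable {k : ℕ}

/-- The unit sphere of `ℂ^k`. -/
abbrev Sph (k : ℕ) := Metric.sphere (0 : EuclideanSpace ℂ (Fin k)) 1

lemma sph_norm (v : Sph k) : ‖v.1‖ = 1 := by simp

open Classical in
/-- Normalised segment from `v` to `u`. -/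
noncomputable def seg (u : Sph k) (x : Sph k × ℝ) : Sph k :=
  if h : (1 - x.2) • x.1.1 + x.2 • u.1 ≠ 0 then
    ⟨‖(1 - x.2) • x.1.1 + x.2 • u.1‖⁻¹ • ((1 - x.2) • x.1.1 + x.2 • u.1), by
      rw [mem_sphere_zero_iff_norm, norm_smul, norm_inv, norm_norm,
        inv_mul_cancel₀ (norm_ne_zero_iff.2 h)]⟩
  else x.1

lemma seg_val (u : Sph k) (x : Sph k × ℝ) (h : (1 - x.2) • x.1.1 + x.2 • u.1 ≠ 0) :
    (seg u x).1 = ‖(1 - x.2) • x.1.1 + x.2 • u.1‖⁻¹ • ((1 - x.2) • x.1.1 + x.2 • u.1) := by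
  rw [seg, dif_pos h]

lemma seg_ne (u v : Sph k) (h : v.1 ≠ -u.1) (t : ℝ) (ht : t ∈ Set.Icc (0 : ℝ) 1) :
    (1 - t) • v.1 + t • u.1 ≠ 0 := by
  intro h0
  have h1 : (1 - t) • v.1 = -(t • u.1) := eq_neg_of_add_eq_zero_left h0
  have h2 := congrArg norm h1
  rw [norm_neg, norm_smul, norm_smul, sph_norm, sph_norm, Real.norm_of_nonneg ht.1,
    Real.norm_of_nonneg (by linarith [ht.2])] at h2
  have h3 : t = 1 / 2 := by linarith
  subst h3
  apply h
  rw [show (1 : ℝ) - 1 / 2 = 1 / 2 by norm_num, ← smul_neg] at h1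
  exact smul_right_injective _ (by norm_num : (1 / 2 : ℝ) ≠ 0) h1

theorem fillS (K Q : Set (Sph k)) (hK : IsClosed K) (u : Sph k) (hu : u ∈ Q)
    (hKu : ∀ v ∈ K, v.1 ≠ -u.1)
    (hQ : ∀ v ∈ K, ∀ y : Sph k, ∀ a b : ℝ, 0 ≤ a → 0 ≤ b → y.1 = a • v.1 + b • u.1 → y ∈ Q)
    (δ : ℝ) (hδ : 0 < δ) :
    ∃ δ' > 0, ∀ d, ∀ z ∈ Sup (Sm δ' K d), lbd z = 0 →
      ∃ w ∈ Sup (Sm δ Q (d + 1)), lbd w = z := by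
  have hne : ∀ x ∈ K ×ˢ Set.Icc (0 : ℝ) 1, (1 - x.2) • x.1.1 + x.2 • u.1 ≠ 0 := by
    rintro ⟨v, t⟩ ⟨hv, ht⟩
    exact seg_ne u v (hKu v hv) t ht
  refine fill K Q hK.isCompact u hu (seg u) ?_ ?_ ?_ ?_ δ hδ
  · rw [Topology.IsInducing.subtypeVal.continuousOn_iff]
    have : ContinuousOn (fun x : Sph k × ℝ =>
        ‖(1 - x.2) • x.1.1 + x.2 • u.1‖⁻¹ • ((1 - x.2) • x.1.1 + x.2 • u.1))
        (K ×ˢ Set.Icc (0 : ℝ) 1) := by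
      have hc : Continuous (fun x : Sph k × ℝ => (1 - x.2) • x.1.1 + x.2 • u.1) := by fun_prop
      exact (hc.norm.continuousOn.inv₀ (fun x hx => norm_ne_zero_iff.2 (hne x hx))).smul
        hc.continuousOn
    exact this.congr fun x hx => seg_val u x (hne x hx)
  · intro v hv
    apply Subtype.ext
    rw [seg_val _ _ (hne (v, 0) ⟨hv, by simp⟩)]
    simp
  · intro v hv
    apply Subtype.ext
    rw [seg_val _ _ (hne (v, 1) ⟨hv, by simp⟩)]
    simp
  · intro v hv t ht
    have h := seg_val _ _ (hne (v, t) ⟨hv, ht⟩)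
    refine hQ v hv _ (‖(1 - t) • v.1 + t • u.1‖⁻¹ * (1 - t)) (‖(1 - t) • v.1 + t • u.1‖⁻¹ * t)
      (mul_nonneg (by positivity) (by linarith [ht.2])) (mul_nonneg (by positivity) ht.1) ?_
    rw [h, smul_add, smul_smul, smul_smul]

/-- The sphere in the first `i` coordinates. -/
def sub (k i : ℕ) : Set (Sph k) := {v | ∀ j : Fin k, i ≤ j.val → v.1 j = 0}

/-- The cone over the sphere in the first `i` coordinates. -/
def cone (k i : ℕ) : Set (Sph k) :=
  {v | v ∈ sub k (i + 1) ∧ ∀ j : Fin k, j.val = i → 0 ≤ (v.1 j).re ∧ (v.1 j).im = 0}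

lemma cont_coord (j : Fin k) : Continuous (fun v : Sph k => v.1 j) := by fun_prop

lemma sub_closed (i : ℕ) : IsClosed (sub k i) := by
  simp only [sub, Set.ofPred_forall]
  exact isClosed_iInter fun j => isClosed_iInter fun _ => isClosed_eq (cont_coord j)
    continuous_const

lemma cone_closed (i : ℕ) : IsClosed (cone k i) := by
  have : cone k i = sub k (i + 1) ∩
      ⋂ j : Fin k, ⋂ _ : j.val = i, {v : Sph k | 0 ≤ (v.1 j).re} ∩ {v | (v.1 j).im = 0} := by
    ext v
    simp [cone]
  rw [this]
  refine (sub_closed _).inter (isClosed_iInter fun j => isClosed_iInter fun _ => ?_)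
  exact (isClosed_le continuous_const (Complex.continuous_re.comp (cont_coord j))).inter
    (isClosed_eq (Complex.continuous_im.comp (cont_coord j)) continuous_const)

/-- The basis point `c e_i`. -/
noncomputable def bp (i : Fin k) (c : ℂ) (hc : ‖c‖ = 1) : Sph k :=
  ⟨EuclideanSpace.single i c, by simp [hc]⟩

variable (ω : Fin k → ℂ) (hω : ∀ j, ‖ω j‖ = 1)

/-- Rotation. -/
noncomputable def rot (v : Sph k) : Sph k :=
  ⟨WithLp.toLp 2 (fun j => ω j * v.1 j), by
    have := sph_norm v
    rw [EuclideanSpace.norm_eq] at this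
    simp [EuclideanSpace.norm_eq, hω, this]⟩

lemma rot_apply (v : Sph k) (j : Fin k) : (rot ω hω v).1 j = ω j * v.1 j := rfl

lemma rot_isometry : Isometry (rot ω hω) := by
  apply Isometry.of_dist_eq
  intro v w
  rw [Subtype.dist_eq, Subtype.dist_eq, EuclideanSpace.dist_eq, EuclideanSpace.dist_eq]
  simp only [rot_apply, dist_eq_norm, ← mul_sub, norm_mul, hω, one_mul]

lemma rot_iter (s : ℕ) (v : Sph k) (j : Fin k) :
    ((rot ω hω)^[s] v).1 j = ω j ^ s * v.1 j := by
  induction s generalizing v with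
  | zero => simp
  | succ s ih =>
    rw [Function.iterate_succ, Function.comp_apply, ih, rot_apply]
    ring

lemma rot_period {p : ℕ} (hp : ∀ j, ω j ^ p = 1) : (rot ω hω)^[p] = id := by
  funext v
  apply Subtype.ext
  ext j
  rw [rot_iter, hp]
  simp

lemma rot_sub (i : ℕ) (v : Sph k) (hv : v ∈ sub k i) (s : ℕ) : (rot ω hω)^[s] v ∈ sub k i := by
  intro j hj
  rw [rot_iter, hv j hj, mul_zero]

lemma sub_mono {i j : ℕ} (h : i ≤ j) : sub k i ⊆ sub k j := fun _ hv l hl => hv l (h.trans hl)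

lemma fill_even (i : Fin k) (δ : ℝ) (hδ : 0 < δ) :
    ∃ δ' > 0, ∀ d, ∀ z ∈ Sup (Sm δ' (sub k i) d), lbd z = 0 →
      ∃ w ∈ Sup (Sm δ (cone k i) (d + 1)), lbd w = z := by
  refine fillS _ _ (sub_closed _) (bp i 1 (by simp)) ?_ ?_ ?_ δ hδ
  · refine ⟨fun j hj => ?_, fun j hj => ?_⟩
    · have : j ≠ i := by rintro rfl; omega
      simp [bp, this]
    · obtain rfl : j = i := Fin.ext hj
      simp [bp]
  · intro v hv h
    have h1 := hv i le_rfl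
    rw [h] at h1
    simp [bp] at h1
  · intro v hv y a b ha hb h
    refine ⟨fun j hj => ?_, fun j hj => ?_⟩
    · have : j ≠ i := by rintro rfl; omega
      rw [h]
      simp [bp, this, hv j (by omega)]
    · obtain rfl : j = i := Fin.ext hj
      rw [h]
      simp [bp, hv j le_rfl, hb]

lemma exists_dir (c : ℂ) : ∃ d : ℂ, ‖d‖ = 1 ∧ -d ≠ 1 ∧ -d ≠ c := by
  by_cases h : c = Complex.I
  · refine ⟨Complex.I, by simp, fun h => ?_, fun h' => ?_⟩
    · simpa using congrArg Complex.im h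
    · rw [h] at h'
      have := congrArg Complex.im h'
      norm_num at this
  · refine ⟨-Complex.I, by simp, fun h => ?_, fun h' => ?_⟩
    · simpa using congrArg Complex.im h
    · exact h (by rw [← h', neg_neg])

lemma nonneg_unit (z : ℂ) (h1 : ‖z‖ = 1) (h2 : 0 ≤ z.re) (h3 : z.im = 0) : z = 1 := by
  have : z = (z.re : ℂ) := by apply Complex.ext <;> simp [h3]
  rw [this, Complex.norm_real, Real.norm_of_nonneg h2] at h1
  rw [this, h1, Complex.ofReal_one]

lemma fill_odd (i : Fin k) (δ : ℝ) (hδ : 0 < δ) :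
    ∃ δ' > 0, ∀ d, ∀ z ∈ Sup (Sm δ' (cone k i ∪ rot ω hω '' cone k i) d), lbd z = 0 →
      ∃ w ∈ Sup (Sm δ (sub k (i + 1)) (d + 1)), lbd w = z := by
  obtain ⟨c, hc, hc1, hc2⟩ := exists_dir (ω i)
  have hsub : ∀ v ∈ cone k i ∪ rot ω hω '' cone k i, v ∈ sub k (i + 1) := by
    rintro v (hv | ⟨w, hw, rfl⟩)
    · exact hv.1
    · exact rot_sub ω hω _ w hw.1 1
  refine fillS _ _ ((cone_closed _).union ((cone_closed _).isCompact.image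
    (rot_isometry ω hω).continuous).isClosed) (bp i c hc) ?_ ?_ ?_ δ hδ
  · intro j hj
    have : j ≠ i := by rintro rfl; omega
    simp [bp, this]
  · rintro v (hv | ⟨w, hw, rfl⟩) h
    · have h1 : v.1 i = -c := by rw [h]; simp [bp]
      have h2 := hv.2 i rfl
      rw [h1] at h2
      exact hc1 (nonneg_unit _ (by simpa using hc) h2.1 h2.2)
    · have h1 : ω i * w.1 i = -c := by rw [← rot_apply ω hω, h]; simp [bp]
      have h2 := hw.2 i rfl
      have h3 : ‖w.1 i‖ = 1 := by
        have := congrArg norm h1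
        rwa [norm_mul, hω, one_mul, norm_neg, hc] at this
      rw [nonneg_unit _ h3 h2.1 h2.2, mul_one] at h1
      exact hc2 h1.symm
  · intro v hv y a b ha hb h j hj
    have : j ≠ i := by rintro rfl; omega
    rw [h]
    simp [bp, this, hsub v hv j hj]

section Algebra

variable {X : Type*} {p : ℕ}

lemma lmap_nrm (τ : X → X) (hτ : τ^[p] = id) (c : LCh X) :
    lmap τ (nrm p τ c) = nrm p τ c := by
  rw [nrm_apply, map_sum]
  simp only [lmap_lmap, ← Function.iterate_succ']
  have h := Finset.sum_range_sub (fun s => lmap (τ^[s]) c) p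
  rw [hτ] at h
  simp only [Function.iterate_zero, sub_self, Finset.sum_sub_distrib] at h
  exact sub_eq_zero.1 h

lemma nrm_lmap (τ : X → X) (c : LCh X) :
    nrm p τ (lmap τ c) = lmap τ (nrm p τ c) := by
  rw [nrm_apply, nrm_apply, map_sum]
  refine Finset.sum_congr rfl fun s _ => ?_
  rw [lmap_lmap, lmap_lmap, ← Function.iterate_succ, ← Function.iterate_succ']

lemma lbd_nrm (τ : X → X) (c : LCh X) : lbd (nrm p τ c) = nrm p τ (lbd c) := by
  rw [nrm_apply, nrm_apply, map_sum]
  exact Finset.sum_congr rfl fun s _ => lbd_lmap _ _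

end Algebra

/-- Existence of the fundamental chains up to degree `2i` / `2i+1`. -/
theorem chains_aux {p : ℕ} (hp : ∀ j, ω j ^ p = 1) (hk : 0 < k) (i : ℕ) (hi : i < k) :
    ∀ δ > 0, ∃ (x : ℕ → LCh (Sph k)) (e : Sph k), x 0 = of [e] ∧
      (∀ j ≤ 2 * i + 1, x j ∈ Sup (Sm δ Set.univ (j + 1))) ∧
      x (2 * i + 1) ∈ Sup (Sm δ (sub k (i + 1)) (2 * i + 2)) ∧
      (∀ i' ≤ i, lbd (x (2 * i' + 1)) = lmap (rot ω hω) (x (2 * i')) - x (2 * i')) ∧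
      (∀ i' < i, lbd (x (2 * i' + 2)) = nrm p (rot ω hω) (x (2 * i' + 1))) := by
  set τ := rot ω hω with hτdef
  have hper : τ^[p] = id := rot_period ω hω hp
  -- the step from even to odd
  have step : ∀ i < k, (∀ δ > 0, ∃ (x : ℕ → LCh (Sph k)) (e : Sph k), x 0 = of [e] ∧
      (∀ j ≤ 2 * i, x j ∈ Sup (Sm δ Set.univ (j + 1))) ∧
      x (2 * i) ∈ Sup (Sm δ (cone k i) (2 * i + 1)) ∧
      (∀ i' < i, lbd (x (2 * i' + 1)) = lmap τ (x (2 * i')) - x (2 * i')) ∧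
      (∀ i' < i, lbd (x (2 * i' + 2)) = nrm p τ (x (2 * i' + 1)))) →
      ∀ δ > 0, ∃ (x : ℕ → LCh (Sph k)) (e : Sph k), x 0 = of [e] ∧
      (∀ j ≤ 2 * i + 1, x j ∈ Sup (Sm δ Set.univ (j + 1))) ∧
      x (2 * i + 1) ∈ Sup (Sm δ (sub k (i + 1)) (2 * i + 2)) ∧
      (∀ i' ≤ i, lbd (x (2 * i' + 1)) = lmap τ (x (2 * i')) - x (2 * i')) ∧
      (∀ i' < i, lbd (x (2 * i' + 2)) = nrm p τ (x (2 * i' + 1))) := by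
    intro i hi h δ hδ
    obtain ⟨δ', hδ', hfill⟩ := fill_odd ω hω ⟨i, hi⟩ δ hδ
    obtain ⟨x, e, hx0, hsm, hxi, hodd, heven⟩ := h (min δ δ') (lt_min hδ hδ')
    obtain ⟨w, hw, hwz⟩ := hfill (2 * i + 1) (lmap τ (x (2 * i)) - x (2 * i)) (by
      apply AddSubgroup.sub_mem
      · refine Sup_map _ ?_ hxi
        intro l hl
        rw [lmap_of]
        apply of_mem_Sup
        refine ⟨by simp [hl.1], ?_, ?_⟩
        · intro a ha
          obtain ⟨b, hb, rfl⟩ := List.mem_map.1 ha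
          exact Or.inr ⟨b, hl.2.1 b hb, rfl⟩
        · intro a ha b hb
          obtain ⟨a, ha', rfl⟩ := List.mem_map.1 ha
          obtain ⟨b, hb', rfl⟩ := List.mem_map.1 hb
          rw [(rot_isometry ω hω).dist_eq]
          exact (hl.2.2 a ha' b hb').trans_le (min_le_right _ _)
      · exact Sup_mono (Sm_mono (min_le_right _ _) Set.subset_union_left _) hxi) (by
      rw [map_sub, lbd_lmap, sub_eq_zero]
      rcases Nat.eq_zero_or_pos i with rfl | hpos
      · simp [hx0, lbd_of_cons]
      · obtain ⟨i, rfl⟩ : ∃ i', i = i' + 1 := ⟨i - 1, by omega⟩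
        rw [show 2 * (i + 1) = 2 * i + 2 by ring, heven i (by omega), lmap_nrm τ hper])
    refine ⟨Function.update x (2 * i + 1) w, e, ?_, ?_, ?_, ?_, ?_⟩
    · rw [Function.update_of_ne (by omega), hx0]
    · intro j hj
      by_cases hji : j = 2 * i + 1
      · subst hji
        rw [Function.update_self]
        exact Sup_mono (Sm_mono le_rfl (Set.subset_univ _) _) hw
      · rw [Function.update_of_ne hji]
        exact Sup_mono (Sm_mono (min_le_left _ _) (Set.subset_univ _) _) (hsm j (by omega))
    · rw [Function.update_self]
      exact hw
    · intro i' hi'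
      rw [Function.update_of_ne (a := 2 * i') (by omega)]
      by_cases hii : i' = i
      · subst hii
        rw [Function.update_self, hwz]
      · rw [Function.update_of_ne (by omega), hodd i' (by omega)]
    · intro i' hi'
      rw [Function.update_of_ne (by omega), Function.update_of_ne (by omega), heven i' hi']
  induction i with
  | zero =>
    refine step 0 hi ?_
    intro δ hδ
    refine ⟨fun _ => of [bp ⟨0, hk⟩ 1 (by simp)], bp ⟨0, hk⟩ 1 (by simp), rfl, ?_, ?_, by simp,
      by simp⟩
    · intro j hj
      obtain rfl : j = 0 := by omega
      apply of_mem_Sup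
      exact ⟨by simp, by simp, by simpa using hδ⟩
    · apply of_mem_Sup
      refine ⟨by simp, ?_, by simpa using hδ⟩
      intro a ha
      obtain rfl := List.mem_singleton.1 ha
      refine ⟨fun j hj => ?_, fun j hj => ?_⟩
      · have : j ≠ ⟨0, hk⟩ := by rintro rfl; simp at hj
        simp [bp, this]
      · obtain rfl : j = ⟨0, hk⟩ := Fin.ext hj
        simp [bp]
  | succ i ih =>
    refine step (i + 1) hi ?_
    intro δ hδ
    obtain ⟨δ', hδ', hfill⟩ := fill_even ⟨i + 1, hi⟩ δ hδ
    obtain ⟨x, e, hx0, hsm, hxi, hodd, heven⟩ := ih (by omega) (min δ δ') (lt_min hδ hδ')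
    obtain ⟨w, hw, hwz⟩ := hfill (2 * i + 2) (nrm p τ (x (2 * i + 1))) (by
      rw [nrm_apply]
      apply AddSubgroup.sum_mem
      intro s _
      refine Sup_map _ ?_ hxi
      intro l hl
      rw [lmap_of]
      apply of_mem_Sup
      refine ⟨by simp [hl.1], ?_, ?_⟩
      · intro a ha
        obtain ⟨b, hb, rfl⟩ := List.mem_map.1 ha
        exact rot_sub ω hω _ b (hl.2.1 b hb) s
      · intro a ha b hb
        obtain ⟨a, ha', rfl⟩ := List.mem_map.1 ha
        obtain ⟨b, hb', rfl⟩ := List.mem_map.1 hb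
        have hiso : Isometry (τ^[s]) := by
          clear * -
          induction s with
          | zero => exact isometry_id
          | succ s ih => exact ih.comp (rot_isometry ω hω)
        rw [hiso.dist_eq]
        exact (hl.2.2 a ha' b hb').trans_le (min_le_right _ _)) (by
      rw [lbd_nrm, hodd i le_rfl, map_sub, nrm_lmap, lmap_nrm τ hper, sub_self])
    have e2 : 2 * (i + 1) = 2 * i + 2 := by ring
    rw [e2]
    refine ⟨Function.update x (2 * i + 2) w, e, ?_, ?_, ?_, ?_, ?_⟩
    · rw [Function.update_of_ne (by omega), hx0]
    · intro j hj
      by_cases hji : j = 2 * i + 2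
      · subst hji
        rw [Function.update_self]
        exact Sup_mono (Sm_mono le_rfl (Set.subset_univ _) _) hw
      · rw [Function.update_of_ne hji]
        exact Sup_mono (Sm_mono (min_le_left _ _) (Set.subset_univ _) _) (hsm j (by omega))
    · rw [Function.update_self]
      exact hw
    · intro i' hi'
      rw [Function.update_of_ne (a := 2 * i') (by omega), Function.update_of_ne (by omega),
        hodd i' (by omega)]
    · intro i' hi'
      rw [Function.update_of_ne (a := 2 * i' + 1) (by omega)]
      by_cases hii : i' = i
      · subst hii
        rw [Function.update_self, hwz]
      · rw [Function.update_of_ne (by omega), heven i' (by omega)]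

end Sphere

open Topology

section Lens

variable {k : ℕ}

/-- The rotation parameters. -/
noncomputable def om (p : ℕ) (ℓ : Fin k → ℤ) (j : Fin k) : ℂ :=
  Complex.exp (2 * Real.pi * Complex.I * ℓ j / p)

lemma om_zpow (p : ℕ) (ℓ : Fin k → ℤ) (j : Fin k) (m : ℤ) :
    om p ℓ j ^ m = Complex.exp (2 * Real.pi * Complex.I * m * ℓ j / p) := by
  rw [om, ← Complex.exp_int_mul]
  congr 1
  ring

lemma om_ne (p : ℕ) (ℓ : Fin k → ℤ) (j : Fin k) : om p ℓ j ≠ 0 := Complex.exp_ne_zero _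

variable {p : ℕ} {ℓ : Fin k → ℤ}

lemma om_zpow_eq_one (hp : p ≠ 0) (hℓ : ∀ j, IsCoprime (ℓ j) (p : ℤ)) (j : Fin k) (m : ℤ) :
    om p ℓ j ^ m = 1 ↔ (p : ℤ) ∣ m := by
  have hpc : (p : ℂ) ≠ 0 := Nat.cast_ne_zero.2 hp
  have h2 := Complex.two_pi_I_ne_zero
  rw [om_zpow, Complex.exp_eq_one_iff]
  constructor
  · rintro ⟨n, hn⟩
    have h1 : (m : ℂ) * ℓ j = n * p := by
      rw [div_eq_iff hpc] at hn
      apply mul_left_cancel₀ h2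
      linear_combination hn
    have h3 : m * ℓ j = n * p := by exact_mod_cast h1
    exact (hℓ j).symm.dvd_of_dvd_mul_right ⟨n, by rw [h3]; ring⟩
  · rintro ⟨n, rfl⟩
    refine ⟨n * ℓ j, ?_⟩
    rw [div_eq_iff hpc]
    push_cast
    ring

lemma om_pow (hp : p ≠ 0) (hℓ : ∀ j, IsCoprime (ℓ j) (p : ℤ)) (j : Fin k) :
    om p ℓ j ^ p = 1 := by
  have := (om_zpow_eq_one hp hℓ j p).2 dvd_rfl
  exact_mod_cast this

lemma om_norm (j : Fin k) : ‖om p ℓ j‖ = 1 := by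
  rw [om, Complex.norm_exp]
  have : (2 * (Real.pi : ℂ) * Complex.I * ℓ j / p) = ((2 * Real.pi * ℓ j / p : ℝ) : ℂ) * Complex.I := by
    push_cast
    ring
  rw [this]
  simp

lemma om_zpow_eq (hp : p ≠ 0) (hℓ : ∀ j, IsCoprime (ℓ j) (p : ℤ)) (j : Fin k) (a b : ℤ) :
    om p ℓ j ^ a = om p ℓ j ^ b ↔ (a : ZMod p) = b := by
  rw [eq_comm, ZMod.intCast_eq_intCast_iff_dvd_sub, ← om_zpow_eq_one hp hℓ j,
    zpow_sub₀ (om_ne p ℓ j), div_eq_one_iff_eq (zpow_ne_zero _ (om_ne p ℓ j))]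

/-- The generator of the deck group. -/
noncomputable abbrev tau (p : ℕ) (ℓ : Fin k → ℤ) : Sph k → Sph k :=
  rot (om p ℓ) (fun _ => om_norm _)

/-- The action of `ZMod p`. -/
noncomputable def act (p : ℕ) (ℓ : Fin k → ℤ) (s : ZMod p) (v : Sph k) : Sph k :=
  (tau p ℓ)^[s.val] v

lemma exists_coord (v : Sph k) : ∃ j, v.1 j ≠ 0 := by
  by_contra! h
  have h1 := sph_norm v
  have : v.1 = 0 := by ext j; simp [h j]
  rw [this] at h1
  simp at h1

lemma act_coord_nat (s : ZMod p) (v : Sph k) (j : Fin k) :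
    (act p ℓ s v).1 j = om p ℓ j ^ s.val * v.1 j := by
  rw [act, rot_iter]

lemma act_coord [NeZero p] (hℓ : ∀ j, IsCoprime (ℓ j) (p : ℤ)) (s : ZMod p) (m : ℤ)
    (hm : (m : ZMod p) = s) (v : Sph k) (j : Fin k) :
    (act p ℓ s v).1 j = om p ℓ j ^ m * v.1 j := by
  rw [act_coord_nat, ← zpow_natCast, (om_zpow_eq (NeZero.ne p) hℓ j _ m).2]
  simp [hm]

lemma act_zero (v : Sph k) : act p ℓ 0 v = v := by
  simp [act]

lemma act_add [NeZero p] (hℓ : ∀ j, IsCoprime (ℓ j) (p : ℤ)) (s t : ZMod p) (v : Sph k) :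
    act p ℓ (s + t) v = act p ℓ s (act p ℓ t v) := by
  apply Subtype.ext
  ext j
  rw [act_coord hℓ (s + t) (s.val + t.val) (by simp), act_coord_nat, act_coord_nat,
    zpow_add₀ (om_ne p ℓ j), zpow_natCast, zpow_natCast, mul_assoc]

lemma act_inj [NeZero p] (hℓ : ∀ j, IsCoprime (ℓ j) (p : ℤ)) (s t : ZMod p) (v : Sph k)
    (h : act p ℓ s v = act p ℓ t v) : s = t := by
  obtain ⟨j, hj⟩ := exists_coord v
  have h1 : (act p ℓ s v).1 j = (act p ℓ t v).1 j := by rw [h]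
  rw [act_coord_nat, act_coord_nat, mul_left_inj' hj, ← zpow_natCast, ← zpow_natCast,
    om_zpow_eq (NeZero.ne p) hℓ] at h1
  simpa using h1

lemma act_one [NeZero p] (hℓ : ∀ j, IsCoprime (ℓ j) (p : ℤ)) (v : Sph k) :
    act p ℓ 1 v = tau p ℓ v := by
  apply Subtype.ext
  ext j
  rw [act_coord hℓ 1 1 (by simp), rot_apply, zpow_one]

lemma act_continuous (s : ZMod p) : Continuous (act p ℓ s) :=
  ((rot_isometry (om p ℓ) (fun _ => om_norm _)).continuous).iterate _

lemma lensRel_iff [NeZero p] (hℓ : ∀ j, IsCoprime (ℓ j) (p : ℤ)) (x y : Sph k) :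
    lensRel p k ℓ x y ↔ ∃ s : ZMod p, y = act p ℓ s x := by
  constructor
  · rintro ⟨m, hm⟩
    refine ⟨m, Subtype.ext ?_⟩
    ext j
    rw [act_coord hℓ _ m rfl, hm, om_zpow]
  · rintro ⟨s, rfl⟩
    refine ⟨s.val, fun j => ?_⟩
    rw [act_coord hℓ s s.val (by simp), om_zpow]

/-- The projection. -/
noncomputable def prj (p : ℕ) (ℓ : Fin k → ℤ) : Sph k → LensSpace p k ℓ := Quot.mk _

lemma prj_eq [NeZero p] (hℓ : ∀ j, IsCoprime (ℓ j) (p : ℤ)) (x y : Sph k) :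
    prj p ℓ x = prj p ℓ y ↔ ∃ s : ZMod p, y = act p ℓ s x := by
  have he : Equivalence (lensRel p k ℓ) := by
    refine ⟨fun x => ?_, fun {x y} h => ?_, fun {x y z} h h' => ?_⟩
    · exact (lensRel_iff hℓ _ _).2 ⟨0, (act_zero x).symm⟩
    · obtain ⟨s, rfl⟩ := (lensRel_iff hℓ _ _).1 h
      exact (lensRel_iff hℓ _ _).2 ⟨-s, by rw [← act_add hℓ, neg_add_cancel, act_zero]⟩
    · obtain ⟨s, rfl⟩ := (lensRel_iff hℓ _ _).1 h
      obtain ⟨t, rfl⟩ := (lensRel_iff hℓ _ _).1 h'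
      exact (lensRel_iff hℓ _ _).2 ⟨t + s, by rw [← act_add hℓ]⟩
  rw [← lensRel_iff hℓ]
  exact he.quot_mk_eq_iff x y

lemma prj_quot : IsQuotientMap (prj p ℓ) := isQuotientMap_quot_mk

lemma prj_cov [NeZero p] (hℓ : ∀ j, IsCoprime (ℓ j) (p : ℤ)) : IsCoveringMap (prj p ℓ) := by
  let : MulAction (Multiplicative (ZMod p)) (Sph k) :=
    { smul := fun s v => act p ℓ s.toAdd v
      one_smul := fun v => act_zero v
      mul_smul := fun s t v => act_add hℓ _ _ v }
  have : ContinuousConstSMul (Multiplicative (ZMod p)) (Sph k) :=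
    ⟨fun s => act_continuous s.toAdd⟩
  have : IsCancelSMul (Multiplicative (ZMod p)) (Sph k) :=
    ⟨fun s t v h => act_inj hℓ _ _ v h⟩
  have : Finite (Multiplicative (ZMod p)) := inferInstanceAs (Finite (ZMod p))
  refine (prj_quot.isQuotientCoveringMap_of_properlyDiscontinuousSMul
    (G := Multiplicative (ZMod p)) ?_).isCoveringMap
  intro x y
  rw [eq_comm, prj_eq hℓ]
  exact ⟨fun ⟨s, h⟩ => ⟨Multiplicative.ofAdd s, h.symm⟩, fun ⟨s, h⟩ => ⟨s.toAdd, h.symm⟩⟩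

lemma prj_act [NeZero p] (hℓ : ∀ j, IsCoprime (ℓ j) (p : ℤ)) (s : ZMod p) (v : Sph k) :
    prj p ℓ (act p ℓ s v) = prj p ℓ v := ((prj_eq hℓ _ _).2 ⟨s, rfl⟩).symm

lemma prj_tau [NeZero p] (hℓ : ∀ j, IsCoprime (ℓ j) (p : ℤ)) (v : Sph k) :
    prj p ℓ (tau p ℓ v) = prj p ℓ v := by rw [← act_one hℓ, prj_act hℓ]

/-- A nullhomotopic open set gives an equivariant labelling. -/
theorem labels [NeZero p] (hℓ : ∀ j, IsCoprime (ℓ j) (p : ℤ)) (U : Set (LensSpace p k ℓ))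
    (hU : IsOpen U)
    (hn : ContinuousMap.Nullhomotopic (⟨Subtype.val, continuous_subtype_val⟩ :
      C(U, LensSpace p k ℓ))) :
    ∃ γ : Sph k → ZMod p, (∀ v, prj p ℓ v ∈ U → γ (tau p ℓ v) = γ v + 1) ∧
      ∀ c, IsOpen (prj p ℓ ⁻¹' U ∩ γ ⁻¹' {c}) := by
  classical
  obtain ⟨y, ⟨H⟩⟩ := hn
  obtain ⟨w, rfl⟩ := prj_quot.surjective y
  have cov := prj_cov hℓ
  have hc : Continuous (prj p ℓ) := prj_quot.continuous
  have hVo : IsOpen (prj p ℓ ⁻¹' U) := hU.preimage hc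
  let V : Set (Sph k) := prj p ℓ ⁻¹' U
  let q : C(V, U) := ⟨fun v => ⟨prj p ℓ v.1, v.2⟩, by fun_prop⟩
  let K : C(unitInterval × V, LensSpace p k ℓ) :=
    ⟨fun x => H (x.1, q x.2), by fun_prop⟩
  let f : C(V, Sph k) := ⟨Subtype.val, continuous_subtype_val⟩
  have hK0 : ∀ a, K (0, a) = prj p ℓ (f a) := fun a => by
    change H (0, q a) = _
    rw [H.apply_zero]
    rfl
  let L := cov.liftHomotopy K f hK0
  have hL0 : ∀ a, L (0, a) = a.1 := fun a => cov.liftHomotopy_zero K f hK0 a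
  have hLp : ∀ x, prj p ℓ (L x) = H (x.1, q x.2) := fun x =>
    congrFun (cov.liftHomotopy_lifts K f hK0) x
  have hend : ∀ a : V, ∃ s : ZMod p, L (1, a) = act p ℓ s w := by
    intro a
    rw [← prj_eq hℓ, hLp, H.apply_one]
    rfl
  choose g hg using hend
  have hV : ∀ v, v ∈ V → tau p ℓ v ∈ V := fun v hv => by
    change prj p ℓ _ ∈ U
    rw [prj_tau hℓ]
    exact hv
  have hequiv : ∀ v (hv : v ∈ V) (t : unitInterval),
      L (t, ⟨tau p ℓ v, hV v hv⟩) = tau p ℓ (L (t, ⟨v, hv⟩)) := by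
    intro v hv t
    have htau : Continuous (tau p ℓ) := (rot_isometry (om p ℓ) (fun _ => om_norm _)).continuous
    have := cov.eq_of_comp_eq (g₁ := fun t => L (t, ⟨tau p ℓ v, hV v hv⟩))
      (g₂ := fun t => tau p ℓ (L (t, ⟨v, hv⟩))) (by fun_prop) (by fun_prop) (by
        funext t
        simp only [Function.comp_apply]
        rw [prj_tau hℓ, hLp, hLp]
        congr 2
        exact Subtype.ext (prj_tau hℓ v)) 0 (by rw [hL0, hL0])
    exact congrFun this t
  refine ⟨fun v => if h : v ∈ V then g ⟨v, h⟩ else 0, ?_, ?_⟩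
  · intro v hv
    simp only [dif_pos (hV v hv), dif_pos (show v ∈ V from hv)]
    apply act_inj hℓ _ _ w
    rw [← hg, hequiv v hv, hg, add_comm, act_add hℓ, act_one hℓ]
  · intro c
    have hclosed : ∀ c, IsClosed (g ⁻¹' {c}) := by
      intro c
      have : g ⁻¹' {c} = {a | L (1, a) = act p ℓ c w} := by
        ext a
        simp only [Set.mem_preimage, Set.mem_singleton_iff, Set.mem_ofPred_eq, hg]
        exact ⟨fun h => by rw [h], fun h => act_inj hℓ _ _ w h⟩
      rw [this]
      exact isClosed_eq (by fun_prop) continuous_const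
    have hopen : IsOpen (g ⁻¹' {c}) := by
      have : g ⁻¹' {c} = (⋃ c' ∈ ({c}ᶜ : Set (ZMod p)), g ⁻¹' {c'})ᶜ := by
        ext a
        simp only [Set.mem_preimage, Set.mem_singleton_iff, Set.mem_compl_iff, Set.mem_iUnion,
          not_exists]
        exact ⟨fun h i hi h' => hi (h'.symm.trans h), fun h => by_contra fun h' => h _ h' rfl⟩
      rw [this, isOpen_compl_iff]
      exact (Set.toFinite _).isClosed_biUnion fun c' _ => hclosed c'
    have := hVo.isOpenMap_subtype_val _ hopen
    convert this using 1
    ext v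
    constructor
    · rintro ⟨h1, h2⟩
      refine ⟨⟨v, h1⟩, ?_, rfl⟩
      simpa [show v ∈ V from h1] using h2
    · rintro ⟨⟨v, h1⟩, h2, rfl⟩
      refine ⟨h1, ?_⟩
      simpa [show v ∈ V from h1] using h2

/-- Lower bound. -/
theorem lower (hk : 1 ≤ k) (hp2 : 2 ≤ p) (hℓ : ∀ j, IsCoprime (ℓ j) (p : ℤ)) (m : ℕ)
    (U : Fin (m + 1) → Set (LensSpace p k ℓ)) (hU : ∀ i, IsOpen (U i))
    (hcov : (⋃ i, U i) = Set.univ)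
    (hn : ∀ i, ContinuousMap.Nullhomotopic (⟨Subtype.val, continuous_subtype_val⟩ :
      C(U i, LensSpace p k ℓ))) : 2 * k - 1 ≤ m := by
  by_contra! hm
  have : NeZero p := ⟨by omega⟩
  have hp0 : p ≠ 0 := NeZero.ne p
  choose γ hγ hγo using fun i => labels hℓ (U i) (hU i) (hn i)
  have hper : (tau p ℓ)^[p] = id := rot_period _ _ (om_pow hp0 hℓ)
  refine no_cover hp2 (k - 1) (tau p ℓ) (rot_isometry (om p ℓ) (fun _ => om_norm _)) ?_
    (fun i => if h : i < m + 1 then prj p ℓ ⁻¹' (U ⟨i, h⟩) else ∅)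
    (fun i => if h : i < m + 1 then γ ⟨i, h⟩ else 0) ?_ ?_ ?_ ?_ ?_
  · intro v
    refine ⟨(tau p ℓ)^[p - 1] v, ?_⟩
    rw [← Function.iterate_succ_apply' (tau p ℓ), Nat.succ_eq_add_one, Nat.sub_add_cancel (by omega), hper]
    rfl
  · intro i v
    by_cases h : i < m + 1
    · simp only [h, dite_true, Set.mem_preimage, prj_tau hℓ]
    · simp [h]
  · intro v
    have : prj p ℓ v ∈ ⋃ i, U i := by rw [hcov]; trivial
    obtain ⟨i, hi⟩ := Set.mem_iUnion.1 this
    refine ⟨i.1, by omega, ?_⟩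
    simpa [i.2] using hi
  · intro i v hv
    by_cases h : i < m + 1
    · simp only [h, dite_true] at hv ⊢
      exact hγ _ v hv
    · simp [h] at hv
  · intro i c
    by_cases h : i < m + 1
    · simp only [h, dite_true]
      exact hγo _ c
    · simp [h]
  · intro δ hδ
    obtain ⟨x, e, h1, h2, -, h3, h4⟩ := chains_aux (om p ℓ) (fun _ => om_norm _)
      (om_pow hp0 hℓ) hk (k - 1) (by omega) δ hδ
    exact ⟨x, e, h1, h2, h3, h4⟩

/-- Descending a homotopy to the quotient. -/
theorem descend [NeZero p] (hℓ : ∀ j, IsCoprime (ℓ j) (p : ℤ)) (U : Set (LensSpace p k ℓ))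
    (h : C(unitInterval × (prj p ℓ ⁻¹' U), Sph k)) (h0 : ∀ z, h (0, z) = z.1)
    (y : LensSpace p k ℓ) (h1 : ∀ z, prj p ℓ (h (1, z)) = y)
    (hc : ∀ t z z', prj p ℓ z.1 = prj p ℓ z'.1 → prj p ℓ (h (t, z)) = prj p ℓ (h (t, z'))) :
    ContinuousMap.Nullhomotopic (⟨Subtype.val, continuous_subtype_val⟩ :
      C(U, LensSpace p k ℓ)) := by
  have hcont : Continuous (prj p ℓ) := prj_quot.continuous
  have hq : IsOpenQuotientMap (U.restrictPreimage (prj p ℓ)) :=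
    ⟨Set.restrictPreimage_surjective _ prj_quot.surjective, hcont.restrictPreimage,
      (prj_cov hℓ).isOpenMap.restrictPreimage U⟩
  have hQ := (IsOpenQuotientMap.id (X := unitInterval)).prodMap hq
  let F : C(unitInterval × (prj p ℓ ⁻¹' U), unitInterval × U) :=
    ⟨Prod.map id (U.restrictPreimage (prj p ℓ)), hQ.continuous⟩
  have hF : IsQuotientMap F := hQ.isQuotientMap
  let G : C(unitInterval × (prj p ℓ ⁻¹' U), LensSpace p k ℓ) :=
    ⟨fun x => prj p ℓ (h x), by fun_prop⟩
  have hG : ∀ a b, F a = F b → G a = G b := by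
    rintro ⟨t, z⟩ ⟨t', z'⟩ hab
    have e1 : t = t' := congrArg Prod.fst hab
    have e2 : prj p ℓ z.1 = prj p ℓ z'.1 := congrArg (fun x => (x.2 : LensSpace p k ℓ)) hab
    subst e1
    exact hc t z z' e2
  have hlift : ∀ x, hF.lift G hG (F x) = G x := fun x =>
    congrArg (fun f => f x) (hF.lift_comp G hG)
  refine ⟨y, ⟨⟨hF.lift G hG, ?_, ?_⟩⟩⟩
  · intro u
    obtain ⟨z, rfl⟩ := hq.surjective u
    refine (hlift (0, z)).trans ?_
    change prj p ℓ (h (0, z)) = _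
    rw [h0]
    rfl
  · intro u
    obtain ⟨z, rfl⟩ := hq.surjective u
    refine (hlift (1, z)).trans ?_
    change prj p ℓ (h (1, z)) = _
    rw [h1]
    rfl

/-- The root function. -/
noncomputable def rt (p : ℕ) (σ c : ℂ) : ℂ := Complex.exp (-Complex.log (σ * c ^ p) / p)

lemma rt_re (hp : 2 ≤ p) (σ c : ℂ) (h : σ * c ^ p ∈ Complex.slitPlane) : 0 < (rt p σ c).re := by
  have hp' : (2 : ℝ) ≤ p := by exact_mod_cast hp
  have hpi := Real.pi_pos
  rw [rt, Complex.exp_re]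
  apply mul_pos (Real.exp_pos _)
  have him : (-Complex.log (σ * c ^ p) / (p : ℂ)).im = -(σ * c ^ p).arg / p := by
    rw [Complex.div_natCast_im, Complex.neg_im, Complex.log_im]
  rw [him]
  have h1 := Complex.arg_le_pi (σ * c ^ p)
  have h2 := Complex.neg_pi_lt_arg (σ * c ^ p)
  have h3 : (σ * c ^ p).arg ≠ Real.pi := Complex.mem_slitPlane_iff_arg.1 h |>.1
  have h4 := lt_of_le_of_ne h1 h3
  apply Real.cos_pos_of_mem_Ioo
  constructor
  · rw [lt_div_iff₀ (by linarith)]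
    nlinarith
  · rw [div_lt_iff₀ (by linarith)]
    nlinarith

lemma rt_pow (hp : p ≠ 0) (σ c : ℂ) (hσ : σ * σ = 1) (h : σ * c ^ p ∈ Complex.slitPlane) :
    (c * rt p σ c) ^ p = σ := by
  have hpc : (p : ℂ) ≠ 0 := Nat.cast_ne_zero.2 hp
  have hne := Complex.slitPlane_ne_zero h
  rw [mul_pow, rt, ← Complex.exp_nat_mul, mul_div_cancel₀ _ hpc, Complex.exp_neg,
    Complex.exp_log hne]
  have h1 : c ^ p ≠ 0 := right_ne_zero_of_mul hne
  have h2 : σ ≠ 0 := left_ne_zero_of_mul hne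
  field_simp
  rw [sq, hσ]

lemma rt_contOn (σ : ℂ) : ContinuousOn (rt p σ) {c | σ * c ^ p ∈ Complex.slitPlane} := by
  unfold rt
  have : ContinuousOn (fun c : ℂ => Complex.log (σ * c ^ p)) {c | σ * c ^ p ∈ Complex.slitPlane} :=
    ContinuousOn.clog (by fun_prop) (fun c hc => hc)
  fun_prop

lemma prim (hp : p ≠ 0) (hℓ : ∀ j, IsCoprime (ℓ j) (p : ℤ)) (j : Fin k) :
    IsPrimitiveRoot (om p ℓ j) p := by
  refine ⟨om_pow hp hℓ j, fun l hl => ?_⟩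
  have := (om_zpow_eq_one hp hℓ j l).1 (by exact_mod_cast hl)
  exact_mod_cast this

lemma norm_one_of_pow (hp : p ≠ 0) (σ c : ℂ) (hσ : σ * σ = 1) (h : c ^ p = σ) : ‖c‖ = 1 := by
  have h1 : c ^ (p * 2) = 1 := by rw [pow_mul, h, sq, hσ]
  exact Complex.norm_eq_one_of_pow_eq_one h1 (by omega)

/-- The unnormalised homotopy. -/
noncomputable def hv (p : ℕ) (j : Fin k) (σ : ℂ) (t : ℝ) (z : Sph k) : EuclideanSpace ℂ (Fin k) :=
  (1 - t) • z.1 + t • EuclideanSpace.single j (z.1 j * rt p σ (z.1 j))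

lemma hv_ne (hp : 2 ≤ p) (j : Fin k) (σ : ℂ) (t : ℝ) (ht : t ∈ Set.Icc (0 : ℝ) 1) (z : Sph k)
    (hz : σ * z.1 j ^ p ∈ Complex.slitPlane) : hv p j σ t z ≠ 0 := by
  intro h
  have hne := Complex.slitPlane_ne_zero hz
  have h1 : z.1 j ≠ 0 := fun h0 => by
    rw [h0, zero_pow (by omega), mul_zero] at hne
    exact hne rfl
  have h2 : (hv p j σ t z) j = 0 := by rw [h]; rfl
  have h3 : z.1 j * ((1 - t : ℝ) + (t : ℝ) * rt p σ (z.1 j)) = 0 := by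
    rw [← h2, hv]
    simp
    ring
  rcases mul_eq_zero.1 h3 with h3 | h3
  · exact h1 h3
  · have h4 := congrArg Complex.re h3
    have h5 := rt_re hp σ _ hz
    simp only [Complex.add_re, Complex.ofReal_re, Complex.re_ofReal_mul, Complex.zero_re] at h4
    rcases ht.1.eq_or_lt with h6 | h6
    · rw [← h6] at h4
      norm_num at h4
    · have := mul_pos h6 h5
      linarith [ht.2]

lemma hv_act [NeZero p] (hℓ : ∀ j, IsCoprime (ℓ j) (p : ℤ)) (j : Fin k) (σ : ℂ) (t : ℝ)
    (s : ZMod p) (z : Sph k) (i : Fin k) :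
    hv p j σ t (act p ℓ s z) i = om p ℓ i ^ s.val * hv p j σ t z i := by
  have hr : rt p σ ((act p ℓ s z).1 j) = rt p σ (z.1 j) := by
    rw [rt, rt, act_coord_nat, mul_pow, ← pow_mul, mul_comm s.val, pow_mul,
      om_pow (NeZero.ne p) hℓ, one_pow, one_mul]
  by_cases hij : i = j
  · subst hij
    simp only [hv, hr]
    simp [act_coord_nat]
    ring
  · simp only [hv, hr]
    simp [act_coord_nat, hij]
    ring

/-- Upper bound: one set. -/
theorem upper_one (hp2 : 2 ≤ p) (hℓ : ∀ j, IsCoprime (ℓ j) (p : ℤ)) (j : Fin k) (σ : ℂ)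
    (hσ : σ * σ = 1) :
    ∃ U : Set (LensSpace p k ℓ), IsOpen U ∧
      (∀ z : Sph k, σ * z.1 j ^ p ∈ Complex.slitPlane → prj p ℓ z ∈ U) ∧
      ContinuousMap.Nullhomotopic (⟨Subtype.val, continuous_subtype_val⟩ :
        C(U, LensSpace p k ℓ)) := by
  have : NeZero p := ⟨by omega⟩
  have hp0 : p ≠ 0 := NeZero.ne p
  let V : Set (Sph k) := {z | σ * z.1 j ^ p ∈ Complex.slitPlane}
  have hVo : IsOpen V := by
    have hc : Continuous (fun z : Sph k => σ * z.1 j ^ p) :=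
      continuous_const.mul ((cont_coord j).pow p)
    exact Complex.isOpen_slitPlane.preimage hc
  have hV : ∀ z, prj p ℓ z ∈ prj p ℓ '' V → σ * z.1 j ^ p ∈ Complex.slitPlane := by
    rintro z ⟨z', hz', he⟩
    obtain ⟨s, rfl⟩ := (prj_eq hℓ _ _).1 he
    rw [act_coord_nat, mul_pow, ← pow_mul, mul_comm s.val, pow_mul, om_pow hp0 hℓ, one_pow,
      one_mul]
    exact hz'
  refine ⟨prj p ℓ '' V, (prj_cov hℓ).isOpenMap _ hVo, fun z hz => ⟨z, hz, rfl⟩, ?_⟩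
  obtain ⟨c, hc⟩ := IsAlgClosed.exists_pow_nat_eq σ (show 0 < p by omega)
  have hne : ∀ x : unitInterval × (prj p ℓ ⁻¹' (prj p ℓ '' V)), hv p j σ x.1 x.2.1 ≠ 0 :=
    fun x => hv_ne hp2 j σ x.1 x.1.2 x.2.1 (hV _ x.2.2)
  have hcont : Continuous (fun x : unitInterval × (prj p ℓ ⁻¹' (prj p ℓ '' V)) =>
      hv p j σ x.1 x.2.1) := by
    have h1 : Continuous (fun x : unitInterval × (prj p ℓ ⁻¹' (prj p ℓ '' V)) => x.2.1.1 j) :=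
      (cont_coord j).comp (continuous_subtype_val.comp continuous_snd)
    have h2 : Continuous (fun x : unitInterval × (prj p ℓ ⁻¹' (prj p ℓ '' V)) =>
        rt p σ (x.2.1.1 j)) := (rt_contOn σ).comp_continuous h1 (fun x => hV _ x.2.2)
    have h3 : Continuous (fun a : ℂ => (EuclideanSpace.single j a : EuclideanSpace ℂ (Fin k))) := by
      refine (PiLp.continuous_toLp 2 _).comp ?_
      exact continuous_single (A := fun _ : Fin k => ℂ) j
    have h4 := h3.comp (h1.mul h2)
    have h5 : Continuous (fun x : unitInterval × (prj p ℓ ⁻¹' (prj p ℓ '' V)) => (x.1 : ℝ)) := by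
      fun_prop
    have h6 : Continuous (fun x : unitInterval × (prj p ℓ ⁻¹' (prj p ℓ '' V)) => x.2.1.1) := by
      fun_prop
    exact ((continuous_const.sub h5).smul h6).add (h5.smul h4)
  let h : C(unitInterval × (prj p ℓ ⁻¹' (prj p ℓ '' V)), Sph k) :=
    ⟨fun x => ⟨‖hv p j σ x.1 x.2.1‖⁻¹ • hv p j σ x.1 x.2.1, by
      rw [mem_sphere_zero_iff_norm, norm_smul, norm_inv, norm_norm,
        inv_mul_cancel₀ (norm_ne_zero_iff.2 (hne x))]⟩, by
      refine Continuous.subtype_mk ?_ _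
      exact (hcont.norm.inv₀ (fun x => norm_ne_zero_iff.2 (hne x))).smul hcont⟩
  refine descend hℓ _ h ?_ (prj p ℓ (bp j c (norm_one_of_pow hp0 σ c hσ hc))) ?_ ?_
  · intro z
    apply Subtype.ext
    change ‖hv p j σ ((0 : unitInterval) : ℝ) z.1‖⁻¹ • hv p j σ ((0 : unitInterval) : ℝ) z.1 = _
    simp [hv]
  · intro z
    have hroot := rt_pow hp0 σ _ hσ (hV _ z.2)
    have hσ0 : σ ≠ 0 := fun h => by simp [h] at hσ
    have hc0 : c ≠ 0 := fun h => hσ0 (by rw [← hc, h, zero_pow hp0])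
    have hnorm := norm_one_of_pow hp0 σ _ hσ hroot
    obtain ⟨s, hs, hs'⟩ := (prim hp0 hℓ j).eq_pow_of_pow_eq_one
      (ξ := z.1.1 j * rt p σ (z.1.1 j) / c) (by rw [div_pow, hroot, hc, div_self hσ0])
    rw [eq_comm, prj_eq hℓ]
    refine ⟨s, Subtype.ext ?_⟩
    ext i
    rw [act_coord hℓ s s (by simp)]
    change (‖hv p j σ ((1 : unitInterval) : ℝ) z.1‖⁻¹ •
      hv p j σ ((1 : unitInterval) : ℝ) z.1) i = _
    have e1 : hv p j σ ((1 : unitInterval) : ℝ) z.1 =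
        EuclideanSpace.single j (z.1.1 j * rt p σ (z.1.1 j)) := by
      simp [hv]
    rw [e1, EuclideanSpace.norm_single, hnorm, inv_one, one_smul]
    by_cases hij : i = j
    · subst hij
      simp only [bp, EuclideanSpace.single_apply, if_true, zpow_natCast]
      rw [hs', div_mul_cancel₀ _ hc0]
    · simp [bp, hij]
  · intro t z z' he
    obtain ⟨s, hs⟩ := (prj_eq hℓ _ _).1 he
    rw [prj_eq hℓ]
    refine ⟨s, Subtype.ext ?_⟩
    have hnorm : ‖hv p j σ t z'.1‖ = ‖hv p j σ t z.1‖ := by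
      rw [EuclideanSpace.norm_eq, EuclideanSpace.norm_eq, hs]
      congr 1
      refine Finset.sum_congr rfl fun i _ => ?_
      rw [hv_act hℓ, norm_mul, norm_pow, om_norm, one_pow, one_mul]
    ext i
    rw [act_coord_nat]
    change (‖hv p j σ t z'.1‖⁻¹ • hv p j σ t z'.1) i =
      om p ℓ i ^ s.val * (‖hv p j σ t z.1‖⁻¹ • hv p j σ t z.1) i
    rw [hnorm, hs, PiLp.smul_apply, PiLp.smul_apply, hv_act hℓ, mul_smul_comm]

/-- Upper bound. -/
theorem upper (hk : 1 ≤ k) (hp2 : 2 ≤ p) (hℓ : ∀ j, IsCoprime (ℓ j) (p : ℤ)) :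
    ∃ U : Fin (2 * k - 1 + 1) → Set (LensSpace p k ℓ), (∀ i, IsOpen (U i)) ∧
      (⋃ i, U i) = Set.univ ∧
      ∀ i, ContinuousMap.Nullhomotopic (⟨Subtype.val, continuous_subtype_val⟩ :
        C(U i, LensSpace p k ℓ)) := by
  choose W hWo hW hWn using fun (j : Fin k) (b : Bool) => upper_one hp2 hℓ j
    (if b then 1 else -1) (by cases b <;> simp)
  refine ⟨fun i => W ⟨i.1 / 2, by omega⟩ (decide (i.1 % 2 = 0)), fun i => hWo _ _, ?_,
    fun i => hWn _ _⟩
  rw [Set.eq_univ_iff_forall]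
  intro y
  obtain ⟨z, rfl⟩ := prj_quot.surjective y
  obtain ⟨j, hj⟩ := exists_coord z
  have hj' : z.1 j ^ p ≠ 0 := pow_ne_zero _ hj
  rw [Set.mem_iUnion]
  have hslit : z.1 j ^ p ∈ Complex.slitPlane ∨ -(z.1 j ^ p) ∈ Complex.slitPlane := by
    rw [Complex.mem_slitPlane_iff, Complex.mem_slitPlane_iff, Complex.neg_re, Complex.neg_im]
    by_contra! hcon
    apply hj'
    apply Complex.ext
    · simp only [Complex.zero_re]
      linarith [hcon.1.1, hcon.2.1]
    · exact hcon.1.2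
  rcases hslit with h | h
  · refine ⟨⟨2 * j.1, by omega⟩, ?_⟩
    have e1 : (⟨2 * j.1 / 2, by omega⟩ : Fin k) = j := Fin.ext (by simp)
    have := hW j true z (by simpa using h)
    simpa [e1] using this
  · refine ⟨⟨2 * j.1 + 1, by omega⟩, ?_⟩
    have e1 : (⟨(2 * j.1 + 1) / 2, by omega⟩ : Fin k) = j := Fin.ext (by simp; omega)
    have := hW j false z (by simpa using h)
    simpa [e1, Nat.add_mod] using this

end Lens

end LensCat

/-- For every odd `n = 2k-1`, `p ≥ 2` and parameters `ℓ` coprime to `p`,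
`cat (L^n_p(ℓ)) = n`. -/
theorem lsCat_lensSpace (k : ℕ) (hk : 1 ≤ k) (n : ℕ) (hn : n = 2 * k - 1)
    (p : ℕ) (hp2 : 2 ≤ p)
    (ℓ : Fin k → ℤ) (hℓ : ∀ j, IsCoprime (ℓ j) (p : ℤ)) :
    lsCat (LensSpace p k ℓ) = n := by
  subst hn
  apply le_antisymm
  · exact Nat.sInf_le (LensCat.upper hk hp2 hℓ)
  · refine le_csInf ⟨_, LensCat.upper hk hp2 hℓ⟩ ?_
    rintro m ⟨U, hU, hcov, hn⟩
    exact LensCat.lower hk hp2 hℓ m U hU hcov hn
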